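/- arXiv:1508.06593 — 2 statements merged into one kernel-verified Lean document; each statement's English description precedes it below -/
import Mathlib

section
/- Let n ≥ 4 and let a be a semi-integer (2a ∈ ℤ, a ≠ 0). Then there exists a proper real algebraic subset B ⊊ ℝ^n (the common zero set of finitely many nonzero real polynomials) such that for every mass vector m = (m_1, …, m_n) ∈ ℝ^n \ B with all m_i > 0, there are only finitely many (n−2)-dimensional central configurations with masses m for the potential U_a up to symmetry; equivalently, the set of mutual-distance vectors (r_{ij})_{1≤i<j≤n} ∈ ℝ^{n(n−1)/2} of (n−2)-dimensional central configurations with masses m, exponent a, and multiplier normalized by λ = M, is finite. -/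
/-- The dimension of a configuration: the dimension of the smallest affine
subspace containing the points. -/
noncomputable def confDim {d n : ℕ} (x : Fin n → EuclideanSpace ℝ (Fin d)) : ℕ :=
  Module.finrank ℝ (affineSpan ℝ (Set.range x)).direction

/-- `x` is a central configuration for the potential `U_a` (with `c2 = 2a ∈ ℤ`),
masses `m`, and multiplier `lam`. -/
def IsCentralConfig {d n : ℕ} (c2 : ℤ) (m : Fin n → ℝ) (lam : ℝ)
    (x : Fin n → EuclideanSpace ℝ (Fin d)) : Prop :=
  ∀ j : Fin n,
    (∑ i ∈ Finset.univ \ {j}, (m i * dist (x i) (x j) ^ c2) • (x i - x j))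
      + lam • (x j - (∑ i, m i)⁻¹ • ∑ i, m i • x i) = 0

/-- Index type for the mutual-distance coordinates `r_{ij}`, `1 ≤ i < j ≤ n`. -/
abbrev PairIdx (n : ℕ) := {p : Fin n × Fin n // p.1 < p.2}

/-- The set of mutual-distance vectors of `(n−2)`-dimensional central configurations
with masses `m`, exponent `2a = c2`, and multiplier normalized by `λ = M`. -/
def ccDistSet (n : ℕ) (c2 : ℤ) (m : Fin n → ℝ) : Set (PairIdx n → ℝ) :=
  {rv | ∃ x : Fin n → EuclideanSpace ℝ (Fin (n - 2)),
    Function.Injective x ∧ IsCentralConfig c2 m (∑ i, m i) x ∧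
    confDim x = n - 2 ∧ ∀ p : PairIdx n, rv p = dist (x p.1.1) (x p.1.2)}

section CC

open MvPolynomial

theorem exists_generic_field {ι X : Type} (v : ι → X → ℝ)
    (h : ¬ ∃ F : MvPolynomial ι ℝ, F ≠ 0 ∧ ∀ x, eval (fun i => v i x) F = 0) :
    ∃ (L : Type) (_ : Field L) (_ : Algebra ℝ L) (φ : (X → ℝ) →ₐ[ℝ] L),
      AlgebraicIndependent ℝ (fun i => φ (v i)) := by
  have key : ∀ F : MvPolynomial ι ℝ, ∀ x, aeval v F x = eval (fun i => v i x) F := by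
    intro F x
    have : (Pi.evalAlgHom ℝ (fun _ : X => ℝ) x).comp (aeval v) = aeval (fun i => v i x) := by
      ext i; simp
    have h2 := congrArg (fun f => f F) this
    simpa [MvPolynomial.aeval_eq_eval] using h2
  let M : Submonoid (X → ℝ) := (nonZeroDivisors (MvPolynomial ι ℝ)).map (aeval (R := ℝ) v)
  have hM : Disjoint ((⊥ : Ideal (X → ℝ)) : Set (X → ℝ)) (M : Set (X → ℝ)) := by
    rw [Set.disjoint_left]
    rintro a ha ⟨F, hF, rfl⟩
    refine h ⟨F, nonZeroDivisors.ne_zero hF, fun x => ?_⟩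
    rw [← key]
    have : aeval v F = 0 := by simpa using ha
    rw [this]; rfl
  obtain ⟨P, hP, -, hd⟩ := Ideal.exists_le_prime_disjoint ⊥ M hM
  refine ⟨FractionRing ((X → ℝ) ⧸ P), inferInstance, inferInstance,
    (IsScalarTower.toAlgHom ℝ ((X → ℝ) ⧸ P) (FractionRing ((X → ℝ) ⧸ P))).comp
      (Ideal.Quotient.mkₐ ℝ P), ?_⟩
  rw [algebraicIndependent_iff]
  intro F hF
  by_contra hne
  have h1 : aeval v F ∈ P := by
    have h2 := (MvPolynomial.comp_aeval_apply (R := ℝ) (f := v) ((IsScalarTower.toAlgHom ℝ ((X → ℝ) ⧸ P) (FractionRing ((X → ℝ) ⧸ P))).comp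
      (Ideal.Quotient.mkₐ ℝ P)) F)
    rw [hF] at h2
    simp only [AlgHom.comp_apply, IsScalarTower.toAlgHom_apply] at h2
    rw [FaithfulSMul.algebraMap_eq_zero_iff] at h2
    exact Ideal.Quotient.eq_zero_iff_mem.mp h2
  exact Set.disjoint_left.mp hd h1 ⟨F, mem_nonZeroDivisors_of_ne_zero hne, rfl⟩

/-- exchange: too many independent elements force independence of the generators. -/
theorem indep_of_algebraic {L : Type} [Field L] [Algebra ℝ L] {ι κ : Type} [Fintype ι] [Fintype κ]
    (hc : Fintype.card κ ≤ Fintype.card ι) (v : ι → L) (w : κ → L)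
    (hv : AlgebraicIndependent ℝ v)
    (hw : ∀ i, IsAlgebraic (Algebra.adjoin ℝ (Set.range w)) (v i)) :
    AlgebraicIndependent ℝ w := by
  let M := AlgebraicIndependent.matroid ℝ L
  have hvi : M.Indep (Set.range v) := hv.coe_range
  have h1 : Set.range v ⊆ M.closure (Set.range w) := by
    rintro _ ⟨i, rfl⟩
    rw [AlgebraicIndependent.matroid_closure_eq]
    exact hw i
  have h2 := hvi.encard_le_eRk_of_subset h1
  rw [Matroid.eRk_closure_eq] at h2
  have h3 : (Set.range v).encard = Fintype.card ι := by
    rw [← Set.image_univ, hv.injective.encard_image]; simp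
  have h4 : (Set.range w).encard ≤ Fintype.card κ := by
    rw [← Set.image_univ]
    exact (Set.encard_image_le _ _).trans (by simp)
  have h5 := M.eRk_le_encard (Set.range w)
  have hc' : (Fintype.card κ : ℕ∞) ≤ Fintype.card ι := by exact_mod_cast hc
  have h6 : M.eRk (Set.range w) = (Set.range w).encard :=
    le_antisymm h5 (h4.trans (hc'.trans (h3 ▸ h2)))
  have h7 : M.Indep (Set.range w) :=
    (Matroid.indep_iff_eRk_eq_encard_of_finite (Set.finite_range w)).2 h6
  have h8 : (Set.range w).encard = Fintype.card κ :=
    le_antisymm h4 (hc'.trans (h3 ▸ h2.trans h5))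
  have h9 : Function.Injective w := by
    have : (w '' Set.univ).encard = (Set.univ : Set κ).encard := by
      rw [Set.image_univ, h8]; simp
    have := Set.Finite.injOn_of_encard_image_eq (Set.toFinite _) this
    exact Set.injOn_univ.mp this
  exact (algebraicIndependent_subtype_range h9).1 h7

/-- bordered matrix of squared distances -/
def bmat {n : ℕ} {R : Type} [CommRing R] (r : Fin n → Fin n → R) :
    Matrix (Option (Fin n)) (Option (Fin n)) R :=
  Matrix.of fun i j => i.elim (j.elim 0 fun _ => 1) (fun i' => j.elim 1 fun j' => r i' j' ^ 2)

/-- cofactor column giving the kernel of `bmat` -/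
def cof {n : ℕ} {R : Type} [CommRing R] (j0 : Option (Fin n)) (r : Fin n → Fin n → R)
    (i : Option (Fin n)) : R :=
  ((bmat r).updateRow j0 (Pi.single j0 1)).adjugate i j0

theorem bmat_map {n : ℕ} {R R' : Type} [CommRing R] [CommRing R'] (φ : R →+* R')
    (r : Fin n → Fin n → R) : bmat (fun i j => φ (r i j)) = φ.mapMatrix (bmat r) := by
  ext i j
  cases i <;> cases j <;> simp [bmat]

theorem cof_map {n : ℕ} {R R' : Type} [CommRing R] [CommRing R'] (φ : R →+* R')
    (j0 : Option (Fin n)) (r : Fin n → Fin n → R) (i : Option (Fin n)) :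
    cof j0 (fun i j => φ (r i j)) i = φ (cof j0 r i) := by
  have : (bmat (fun i j => φ (r i j))).updateRow j0 (Pi.single j0 1)
      = φ.mapMatrix ((bmat r).updateRow j0 (Pi.single j0 1)) := by
    rw [bmat_map]
    ext a b
    by_cases h : a = j0
    · subst h
      by_cases hb : b = a
      · subst hb; simp
      · simp [hb]
    · simp [h]
  unfold cof
  rw [this, ← RingHom.map_adjugate]
  rfl

/-- At the regular simplex the bordered matrix is nonsingular. -/
theorem det_bmat_simplex {n : ℕ} (hn : 0 < n) (r : Fin n → Fin n → ℝ) (h0 : ∀ i, r i i = 0)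
    (h1 : ∀ i j, i ≠ j → r i j = 1) : (bmat r).det ≠ 0 := by
  intro h
  obtain ⟨v, hv, hb⟩ := Matrix.exists_mulVec_eq_zero_iff.2 h
  have e0 := congrFun hb none
  simp only [Matrix.mulVec, dotProduct, Fintype.sum_option, bmat] at e0
  simp at e0
  have e1 : ∀ i, v (some i) = v none := by
    intro i
    have e := congrFun hb (some i)
    simp only [Matrix.mulVec, dotProduct, Fintype.sum_option, bmat] at e
    simp at e
    have : ∀ j, r i j ^ 2 * v (some j) = v (some j) - if i = j then v (some j) else 0 := by
      intro j
      by_cases hij : i = j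
      · subst hij; simp [h0]
      · simp [hij, h1 i j hij]
    simp only [this, Finset.sum_sub_distrib, e0] at e
    simp at e
    linarith
  simp [e1] at e0
  have : v none = 0 := e0.resolve_left (by omega)
  apply hv
  ext i
  cases i with
  | none => exact this
  | some i => simp [e1, this]

theorem isAlgebraic_of_pow {R S : Type} [CommRing R] [IsDomain R] [CommRing S] [Algebra R S]
    {N : ℕ} (hN : N ≠ 0) (s : S) (u : R)
    (h : s ^ N = algebraMap R S u ∨ s ^ N * algebraMap R S u = 1) : IsAlgebraic R s := by
  rcases h with h | h
  · refine ⟨Polynomial.X ^ N - Polynomial.C u, (Polynomial.monic_X_pow_sub_C u hN).ne_zero, ?_⟩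
    simp [h]
  · refine ⟨Polynomial.C u * Polynomial.X ^ N - 1, ?_, ?_⟩
    · intro h0
      have := congrArg (fun p => Polynomial.coeff p 0) h0
      simp [Polynomial.coeff_X_pow, hN.symm] at this
    · simp only [map_sub, map_mul, Polynomial.aeval_C, map_pow, Polynomial.aeval_X, map_one]
      rw [mul_comm, h, sub_self]

theorem zpow_cases (c2 : ℤ) :
    (∀ r u : ℝ, 0 < r → r ^ c2 = u → r ^ c2.natAbs = u) ∨
    (∀ r u : ℝ, 0 < r → r ^ c2 = u → r ^ c2.natAbs * u = 1) := by
  rcases Int.natAbs_eq c2 with e | e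
  · left
    rintro r u hr rfl
    rw [← zpow_natCast, ← e]
  · right
    rintro r u hr rfl
    rw [← zpow_natCast, ← zpow_add₀ hr.ne']
    have : (c2.natAbs : ℤ) + c2 = 0 := by omega
    rw [this, zpow_zero]

theorem isAlgebraic_det {R S : Type} [CommRing R] [IsDomain R] [CommRing S] [Algebra R S] {n : ℕ}
    (r : Fin n → Fin n → S) (h : ∀ i j, IsAlgebraic R (r i j)) : IsAlgebraic R (bmat r).det := by
  let K := Subalgebra.algebraicClosure R S
  let r' : Fin n → Fin n → K := fun i j => ⟨r i j, h i j⟩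
  have : (bmat r).det = (K.val : K →+* S) (bmat r').det := by
    rw [RingHom.map_det, ← bmat_map]; rfl
  rw [this]
  exact (bmat r').det.2

theorem isAlgebraic_cof {R S : Type} [CommRing R] [IsDomain R] [CommRing S] [Algebra R S] {n : ℕ}
    (r : Fin n → Fin n → S) (h : ∀ i j, IsAlgebraic R (r i j)) (j0 i) :
    IsAlgebraic R (cof j0 r i) := by
  let K := Subalgebra.algebraicClosure R S
  let r' : Fin n → Fin n → K := fun i j => ⟨r i j, h i j⟩
  have : cof j0 r i = (K.val : K →+* S) (cof j0 r' i) := by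
    rw [← cof_map]; rfl
  rw [this]
  exact (cof j0 r' i).2

/-- extension by zero -/
def ext0 {n : ℕ} (S : Finset (Fin n)) (y : S → ℝ) (i : Fin n) : ℝ :=
  if h : i ∈ S then y ⟨i, h⟩ else 0

/-- the distances determined by `z` -/
noncomputable def rho {n : ℕ} (c2 : ℤ) (k : ℝ) (z : Fin n → ℝ) (i j : Fin n) : ℝ :=
  if i = j then 0 else Real.exp (Real.log (1 + k * z i * z j) / c2)

theorem rho_eq {n : ℕ} {c2 : ℤ} (hc2 : c2 ≠ 0) {k : ℝ} {z : Fin n → ℝ} {i j : Fin n} (hij : i ≠ j)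
    {r : ℝ} (hr : 0 < r) (h : r ^ c2 = 1 + k * z i * z j) : rho c2 k z i j = r := by
  have hc : (c2 : ℝ) ≠ 0 := by exact_mod_cast hc2
  rw [rho, if_neg hij, ← h, Real.log_zpow, mul_div_cancel_left₀ _ hc, Real.exp_log hr]

theorem rho_zpow {n : ℕ} {c2 : ℤ} (hc2 : c2 ≠ 0) {k : ℝ} {z : Fin n → ℝ} {i j : Fin n} (hij : i ≠ j)
    (h : 0 < 1 + k * z i * z j) : rho c2 k z i j ^ c2 = 1 + k * z i * z j := by
  have hc : (c2 : ℝ) ≠ 0 := by exact_mod_cast hc2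
  rw [rho, if_neg hij, ← Real.rpow_intCast, ← Real.exp_mul, div_mul_cancel₀ _ hc, Real.exp_log h]

theorem rho_pos {n : ℕ} {c2 : ℤ} {k : ℝ} {z : Fin n → ℝ} {i j : Fin n} (hij : i ≠ j) :
    0 < rho c2 k z i j := by
  rw [rho, if_neg hij]; exact Real.exp_pos _

theorem exists_relation {n : ℕ} (hn : 0 < n) (c2 : ℤ) (hc2 : c2 ≠ 0) (k : ℝ) (S : Finset (Fin n)) :
    ∃ q : MvPolynomial S ℝ, q ≠ 0 ∧ ∀ (z : Fin n → ℝ) (r : Fin n → Fin n → ℝ),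
      (∀ i, i ∉ S → z i = 0) → (∀ i, r i i = 0) → (∀ i j, i ≠ j → 0 < r i j) →
      (∀ i j, i ≠ j → r i j ^ c2 = 1 + k * z i * z j) → (bmat r).det = 0 →
      eval (fun i : S => z i) q = 0 := by
  let D : Set (S → ℝ) := {y | ∀ i j, i ≠ j → 0 < 1 + k * ext0 S y i * ext0 S y j}
  let f : (S → ℝ) → ℝ := fun y => (bmat (rho c2 k (ext0 S y))).det
  have hext_an : ∀ i y, AnalyticAt ℝ (fun y => ext0 S y i) y := by
    intro i y
    by_cases h : i ∈ S
    · simp only [ext0, h, dite_true]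
      exact (ContinuousLinearMap.proj (R := ℝ) (φ := fun _ : S => ℝ) ⟨i, h⟩).analyticAt y
    · simp only [ext0, h, dite_false]
      exact analyticAt_const
  have hrho_an : ∀ y ∈ D, ∀ i j, AnalyticAt ℝ (fun y => rho c2 k (ext0 S y) i j) y := by
    intro y hy i j
    by_cases hij : i = j
    · simp only [rho, hij, if_true]; exact analyticAt_const
    · simp only [rho, hij, if_false]
      have h1 : AnalyticAt ℝ (fun y => 1 + k * ext0 S y i * ext0 S y j) y :=
        analyticAt_const.add ((analyticAt_const.mul (hext_an i y)).mul (hext_an j y))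
      have h2 : AnalyticAt ℝ (fun y => Real.log (1 + k * ext0 S y i * ext0 S y j)) y :=
        AnalyticAt.fun_comp (g := Real.log) (analyticAt_id.log (hy i j hij)) h1
      refine AnalyticAt.rexp' (AnalyticAt.div h2 analyticAt_const ?_)
      · exact_mod_cast hc2
  have hf_an : AnalyticOnNhd ℝ f D := by
    intro y hy
    simp only [f, Matrix.det_apply']
    refine Finset.analyticAt_fun_sum _ fun σ _ => analyticAt_const.mul
      (Finset.analyticAt_fun_prod _ fun i _ => ?_)
    rcases h1 : σ i with _ | a <;> rcases i with _ | b <;> simp only [bmat, Matrix.of_apply, Option.elim]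
    · exact analyticAt_const
    · exact analyticAt_const
    · exact analyticAt_const
    · exact (hrho_an y hy _ _).pow 2
  have hD0 : (0 : S → ℝ) ∈ D := by
    intro i j _
    simp [ext0]
  have hDc : IsPreconnected D := by
    have : StarConvex ℝ (0 : S → ℝ) D := by
      rw [starConvex_zero_iff]
      intro y hy t ht0 ht1 i j hij
      have e : ∀ i, ext0 S (t • y) i = t * ext0 S y i := by
        intro i; by_cases h : i ∈ S <;> simp [ext0, h]
      rw [e, e]
      have h1 := hy i j hij
      have h2 : t ^ 2 ≤ 1 := by nlinarith
      have h3 : 1 + k * (t * ext0 S y i) * (t * ext0 S y j)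
        = (1 - t ^ 2) + t ^ 2 * (1 + k * ext0 S y i * ext0 S y j) := by ring
      rw [h3]
      rcases ht0.eq_or_lt with h | h
      · rw [← h]; norm_num
      · have := mul_pos (pow_pos h 2) h1
        linarith
    exact (this.isPathConnected hD0).isConnected.isPreconnected
  have hf0 : f 0 ≠ 0 := by
    refine det_bmat_simplex hn _ (fun i => by simp [rho]) fun i j hij => ?_
    simp [rho, hij, ext0]
  let _ : Algebra (MvPolynomial S ℝ) (D → ℝ) :=
    RingHom.toAlgebra (RingHom.pi fun y : D => MvPolynomial.eval y.1)
  have hmap : ∀ (p : MvPolynomial S ℝ) (y : D), algebraMap (MvPolynomial S ℝ) (D → ℝ) p y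
      = eval y.1 p := fun p y => rfl
  have halg : IsAlgebraic (MvPolynomial S ℝ) (fun y : D => f y) := by
    have : (fun y : D => f y)
        = (bmat (fun i j => (fun y : D => rho c2 k (ext0 S y.1) i j : D → ℝ))).det := by
      ext y
      have h1 := RingHom.map_det (Pi.evalRingHom (fun _ : D => ℝ) y)
        (bmat (fun i j => (fun y : D => rho c2 k (ext0 S y.1) i j : D → ℝ)))
      rw [← bmat_map] at h1
      exact h1.symm
    rw [this]
    apply isAlgebraic_det
    intro i j
    by_cases hij : i = j
    · have : (fun y : D => rho c2 k (ext0 S y.1) i j) = 0 := by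
        ext y; simp [rho, hij]
      rw [this]; exact isAlgebraic_zero
    · let X' : Fin n → MvPolynomial S ℝ := fun i => if h : i ∈ S then X ⟨i, h⟩ else 0
      have hX' : ∀ i (y : S → ℝ), eval y (X' i) = ext0 S y i := by
        intro i y; by_cases h : i ∈ S <;> simp [X', ext0, h]
      let u : MvPolynomial S ℝ := 1 + C k * X' i * X' j
      have hu : ∀ y : D, algebraMap (MvPolynomial S ℝ) (D → ℝ) u y
          = 1 + k * ext0 S y.1 i * ext0 S y.1 j := by
        intro y; rw [hmap]; simp [u, hX']
      refine isAlgebraic_of_pow (Int.natAbs_ne_zero.2 hc2) _ u ?_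
      rcases zpow_cases c2 with e | e
      · left
        ext y
        rw [hu]
        exact e _ _ (rho_pos hij) (rho_zpow hc2 hij (y.2 i j hij))
      · right
        ext y
        rw [Pi.mul_apply, hu]
        exact e _ _ (rho_pos hij) (rho_zpow hc2 hij (y.2 i j hij))
  obtain ⟨P, hP, hPf⟩ := halg
  obtain ⟨Q, hPQ, hQ⟩ := Polynomial.exists_eq_pow_rootMultiplicity_mul_and_not_dvd P hP 0
  simp only [Polynomial.C_0, sub_zero] at hPQ hQ
  rw [Polynomial.X_dvd_iff] at hQ
  refine ⟨Q.coeff 0, hQ, ?_⟩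
  let g : (S → ℝ) → ℝ := fun y =>
    ∑ i ∈ Finset.range (Q.natDegree + 1), eval y (Q.coeff i) * f y ^ i
  have hg_an : AnalyticOnNhd ℝ g D := by
    intro y hy
    refine Finset.analyticAt_fun_sum _ fun i _ => AnalyticAt.mul ?_ ((hf_an y hy).pow i)
    exact AnalyticOnNhd.eval_mvPolynomial _ y trivial
  have hprod : ∀ y ∈ D, f y ^ (P.rootMultiplicity 0) * g y = 0 := by
    intro y hy
    rw [hPQ] at hPf
    have := congrFun hPf ⟨y, hy⟩
    rw [map_mul, map_pow, Polynomial.aeval_X, Polynomial.aeval_eq_sum_range] at this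
    simp only [Pi.mul_apply, Pi.pow_apply, Finset.sum_apply, Algebra.smul_def, hmap] at this
    exact this
  have hg0 : g =ᶠ[nhds 0] 0 := by
    have h1 : ∀ᶠ y in nhds (0 : S → ℝ), f y ≠ 0 :=
      (hf_an 0 hD0).continuousAt.eventually_ne hf0
    have h2 : D ∈ nhds (0 : S → ℝ) := by
      have hc : ∀ i, Continuous fun y : S → ℝ => ext0 S y i := fun i =>
        continuous_iff_continuousAt.2 fun y => (hext_an i y).continuousAt
      have : IsOpen D := by
        have : D = ⋂ i, ⋂ j, ⋂ (_ : i ≠ j), {y | 0 < 1 + k * ext0 S y i * ext0 S y j} := by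
          ext y; simp [D]
        rw [this]
        refine isOpen_iInter_of_finite fun i => isOpen_iInter_of_finite fun j =>
          isOpen_iInter_of_finite fun _ => isOpen_lt continuous_const ?_
        exact continuous_const.add ((continuous_const.mul (hc i)).mul (hc j))
      exact this.mem_nhds hD0
    filter_upwards [h1, h2] with y hy1 hy2
    exact (mul_eq_zero.1 (hprod y hy2)).resolve_left (pow_ne_zero _ hy1)
  have hgD := hg_an.eqOn_zero_of_preconnected_of_eventuallyEq_zero hDc hD0 hg0
  intro z r hz hr0 hr1 hrz hdet
  let y : S → ℝ := fun i => z i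
  have hzy : ext0 S y = z := by
    ext i; by_cases h : i ∈ S
    · simp [ext0, h, y]
    · simp [ext0, h, hz]
  have hy : y ∈ D := by
    intro i j hij
    rw [hzy, ← hrz i j hij]
    exact zpow_pos (hr1 i j hij) _
  have hrr : rho c2 k z = r := by
    ext i j
    by_cases hij : i = j
    · subst hij; simp [rho, hr0]
    · exact rho_eq hc2 hij (hr1 i j hij) (hrz i j hij)
  have hfy : f y = 0 := by simp only [f, hzy, hrr, hdet]
  have := hgD hy
  simp only [g, hfy, Finset.sum_range_succ', Pi.zero_apply] at this
  simpa using this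

/-- The algebraic data attached to a central configuration. -/
structure Good {n : ℕ} (c2 : ℤ) (k : ℝ) (S : Finset (Fin n)) (j0 : Option (Fin n))
    (q : MvPolynomial S ℝ) (m z : Fin n → ℝ) (r : Fin n → Fin n → ℝ) (t : ℝ) : Prop where
  zin : ∀ i, i ∈ S → z i ≠ 0
  zout : ∀ i, i ∉ S → z i = 0
  r0 : ∀ i, r i i = 0
  rpos : ∀ i j, i ≠ j → 0 < r i j
  rz : ∀ i j, i ≠ j → r i j ^ c2 = 1 + k * z i * z j
  hm : ∀ i, z i * m i = t * cof j0 r (some i)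
  hq : eval (fun i : S => z i) q = 0

theorem exists_F {n : ℕ} (c2 : ℤ) (hc2 : c2 ≠ 0) (k : ℝ) (S : Finset (Fin n)) (j0 : Option (Fin n))
    (q : MvPolynomial S ℝ) (hq : q ≠ 0) (a b : Fin n) :
    ∃ F : MvPolynomial (Option (Fin n)) ℝ, F ≠ 0 ∧ ∀ m z r t, Good c2 k S j0 q m z r t →
      eval (fun o => Option.elim o (r a b) m) F = 0 := by
  let X := {p : (Fin n → ℝ) × (Fin n → ℝ) × (Fin n → Fin n → ℝ) × ℝ //
    Good c2 k S j0 q p.1 p.2.1 p.2.2.1 p.2.2.2}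
  let M : Fin n → X → ℝ := fun i x => x.1.1 i
  let Z : Fin n → X → ℝ := fun i x => x.1.2.1 i
  let Rr : Fin n → Fin n → X → ℝ := fun i j x => x.1.2.2.1 i j
  let T : X → ℝ := fun x => x.1.2.2.2
  let v : Option (Fin n) → X → ℝ := fun o => o.elim (Rr a b) M
  by_contra hcon
  have hno : ¬ ∃ F : MvPolynomial (Option (Fin n)) ℝ, F ≠ 0 ∧
      ∀ x, eval (fun i => v i x) F = 0 := by
    rintro ⟨F, hF, h⟩
    refine hcon ⟨F, hF, fun m z r t hg => ?_⟩
    rw [← h ⟨(m, z, r, t), hg⟩]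
    congr 2
    ext o
    cases o <;> rfl
  obtain ⟨L, _, _, φ, hind⟩ := exists_generic_field v hno
  let w : Option (Fin n) → L := fun o => o.elim (φ T) (fun i => if i ∈ S then φ (Z i) else φ (M i))
  let R := Algebra.adjoin ℝ (Set.range w)
  have hwR : ∀ o, w o ∈ R := fun o => Algebra.subset_adjoin ⟨o, rfl⟩
  have halgR : ∀ x ∈ R, IsAlgebraic R x := fun x hx => isAlgebraic_algebraMap (⟨x, hx⟩ : R)
  have hZR : ∀ i, φ (Z i) ∈ R := by
    intro i
    by_cases h : i ∈ S
    · have := hwR (some i)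
      simpa [w, h] using this
    · have : Z i = 0 := by ext x; exact x.2.zout i h
      rw [this, map_zero]; exact R.zero_mem
  have hRalg : ∀ i j, IsAlgebraic R (φ (Rr i j)) := by
    intro i j
    by_cases hij : i = j
    · have : Rr i j = 0 := by ext x; subst hij; exact x.2.r0 i
      rw [this, map_zero]; exact isAlgebraic_zero
    · let u : R := 1 + algebraMap ℝ R k * ⟨φ (Z i), hZR i⟩ * ⟨φ (Z j), hZR j⟩
      let U : X → ℝ := 1 + algebraMap ℝ (X → ℝ) k * Z i * Z j
      have hU : algebraMap R L u = φ U := by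
        simp only [U, map_add, map_one, map_mul, AlgHom.commutes]
        rfl
      have hUx : ∀ x : X, U x = 1 + k * x.1.2.1 i * x.1.2.1 j := fun x => rfl
      refine isAlgebraic_of_pow (Int.natAbs_ne_zero.2 hc2) _ u ?_
      rw [hU]
      rcases zpow_cases c2 with e | e
      · left
        rw [← map_pow]
        congr 1
        ext x
        exact e _ _ (x.2.rpos i j hij) ((x.2.rz i j hij).trans (hUx x).symm)
      · right
        rw [← map_pow, ← map_mul, ← map_one φ]
        congr 1
        ext x
        exact e _ _ (x.2.rpos i j hij) ((x.2.rz i j hij).trans (hUx x).symm)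
  have hcof : ∀ i, IsAlgebraic R (φ (cof j0 Rr i)) := by
    intro i
    have := isAlgebraic_cof (R := R) (fun i j => φ (Rr i j)) hRalg j0 i
    rwa [show cof j0 (fun i j => φ (Rr i j)) i = φ (cof j0 Rr i) from
      cof_map (φ : (X → ℝ) →+* L) j0 Rr i] at this
  have hMalg : ∀ i, IsAlgebraic R (φ (M i)) := by
    intro i
    by_cases h : i ∈ S
    · have hne : φ (Z i) ≠ 0 := by
        intro h0
        have : Z i * (Z i)⁻¹ = 1 := by
          ext x; exact mul_inv_cancel₀ (x.2.zin i h)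
        have := congrArg φ this
        rw [map_mul, h0, zero_mul, map_one] at this
        exact zero_ne_one this
      refine IsAlgebraic.of_mul (mem_nonZeroDivisors_of_ne_zero hne) (halgR _ (hZR i)) ?_
      have : Z i * M i = T * cof j0 Rr (some i) := by
        ext x
        refine (x.2.hm i).trans ?_
        have := cof_map (Pi.evalRingHom (fun _ : X => ℝ) x) j0 Rr (some i)
        exact congrArg (T x * ·) this
      rw [← map_mul, this, map_mul]
      exact (halgR _ (hwR none)).mul (hcof _)
    · have := hwR (some i)
      simp only [w, Option.elim, h, if_false] at this
      exact halgR _ this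
  have hwi : AlgebraicIndependent ℝ w := by
    refine indep_of_algebraic le_rfl _ w hind ?_
    rintro (_ | i)
    · exact hRalg a b
    · exact hMalg i
  have hzi : AlgebraicIndependent ℝ (fun i : S => φ (Z i)) := by
    have := hwi.comp (fun i : S => some i.1) (fun i j h =>
      Subtype.ext (Option.some.inj h))
    have e : (fun i : S => φ (Z i)) = w ∘ fun i : S => some i.1 := by
      funext i
      exact (if_pos i.2).symm
    rw [e]
    exact this
  refine hq ((algebraicIndependent_iff.1 hzi) q ?_)
  have h1 : aeval (fun i : S => φ (Z i)) q = φ (aeval (fun i : S => Z i) q) :=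
    (MvPolynomial.comp_aeval_apply (R := ℝ) (f := fun i : S => Z i) φ q).symm
  have h2 : aeval (fun i : S => Z i) q = 0 := by
    ext x
    have h3 := MvPolynomial.comp_aeval_apply (R := ℝ) (f := fun i : S => Z i)
      (Pi.evalAlgHom ℝ (fun _ : X => ℝ) x) q
    refine h3.trans ?_
    have := x.2.hq
    rw [← MvPolynomial.aeval_eq_eval] at this
    exact this
  rw [h1, h2, map_zero]

theorem exists_p {n : ℕ} (c2 : ℤ) (hc2 : c2 ≠ 0) (k : ℝ) (S : Finset (Fin n)) (j0 : Option (Fin n))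
    (q : MvPolynomial S ℝ) (hq : q ≠ 0) :
    ∃ p : MvPolynomial (Fin n) ℝ, p ≠ 0 ∧ ∀ m, eval m p ≠ 0 →
      {rv : PairIdx n → ℝ | ∃ z r t, Good c2 k S j0 q m z r t ∧
        ∀ p : PairIdx n, rv p = r p.1.1 p.1.2}.Finite := by
  choose F hF hF' using fun ab : PairIdx n => exists_F c2 hc2 k S j0 q hq ab.1.1 ab.1.2
  let G : PairIdx n → Polynomial (MvPolynomial (Fin n) ℝ) := fun ab => optionEquivLeft ℝ (Fin n) (F ab)
  have hG : ∀ ab, G ab ≠ 0 := fun ab => by simpa [G] using hF ab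
  refine ⟨∏ ab, (G ab).leadingCoeff, ?_, ?_⟩
  · exact Finset.prod_ne_zero_iff.2 fun ab _ => Polynomial.leadingCoeff_ne_zero.2 (hG ab)
  · intro m hm
    rw [map_prod, Finset.prod_ne_zero_iff] at hm
    have hne : ∀ ab, (G ab).map (eval m) ≠ 0 := by
      intro ab h0
      apply hm ab (Finset.mem_univ _)
      have := congrArg (fun p => Polynomial.coeff p (G ab).natDegree) h0
      simpa using this
    refine (Set.Finite.pi' (t := fun ab => {y | ((G ab).map (eval m)).IsRoot y})
      fun ab => ?_).subset ?_
    · exact Polynomial.finite_setOfPred_isRoot (hne ab)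
    · rintro rv ⟨z, r, t, hg, h⟩ ab
      have := hF' ab m z r t hg
      rw [optionEquivLeft_elim_eval] at this
      rw [h ab]
      exact this

/-- affine dependency conditions -/
def AffDep {d n : ℕ} (x : Fin n → EuclideanSpace ℝ (Fin d)) (w : Fin n → ℝ) : Prop :=
  ∑ i, w i = 0 ∧ ∑ i, w i • x i = 0

theorem span_top {n : ℕ} (x : Fin n → EuclideanSpace ℝ (Fin (n - 2)))
    (hd : confDim x = n - 2) (i0 : Fin n) :
    Submodule.span ℝ (Set.range fun i => x i - x i0) = ⊤ := by
  have h1 : (affineSpan ℝ (Set.range x)).direction = ⊤ := by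
    apply Submodule.eq_top_of_finrank_eq
    rw [finrank_euclideanSpace_fin]
    exact hd
  rw [direction_affineSpan, vectorSpan_range_eq_span_range_vsub_right ℝ x i0] at h1
  exact h1

theorem exists_dep {n : ℕ} (hn : 2 ≤ n) (x : Fin n → EuclideanSpace ℝ (Fin (n - 2)))
    (hd : confDim x = n - 2) :
    ∃ Δ : Fin n → ℝ, Δ ≠ 0 ∧ AffDep x Δ ∧ ∀ w, AffDep x w → ∃ c : ℝ, ∀ i, w i = c * Δ i := by
  let E := EuclideanSpace ℝ (Fin (n - 2))
  let Φ : (Fin n → ℝ) →ₗ[ℝ] ℝ × E :=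
    { toFun := fun w => (∑ i, w i, ∑ i, w i • x i)
      map_add' := by intro a b; simp [Finset.sum_add_distrib, add_smul]
      map_smul' := by intro a b; simp [Finset.mul_sum, Finset.smul_sum, mul_smul] }
  have hΦ : ∀ w, Φ w = (∑ i, w i, ∑ i, w i • x i) := fun w => rfl
  let i0 : Fin n := ⟨0, by omega⟩
  have hs1 : ∀ i, Φ (Pi.single i 1) = (1, x i) := by
    intro i
    rw [hΦ]
    simp [Pi.single_apply]
  have hsurj : LinearMap.range Φ = ⊤ := by
    have hE : ∀ e : E, ((0 : ℝ), e) ∈ LinearMap.range Φ := by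
      have : Submodule.span ℝ (Set.range fun i => x i - x i0)
          ≤ (LinearMap.range Φ).comap (LinearMap.inr ℝ ℝ E) := by
        rw [Submodule.span_le]
        rintro _ ⟨i, rfl⟩
        refine ⟨Pi.single i 1 - Pi.single i0 1, ?_⟩
        rw [map_sub, hs1, hs1]
        simp
      rw [span_top x hd] at this
      intro e
      exact this (Submodule.mem_top (x := e))
    rw [eq_top_iff]
    rintro ⟨s, e⟩ -
    have h1 : (s, e) = s • Φ (Pi.single i0 1) + (0, e - s • x i0) := by
      rw [hs1]; simp
    rw [h1]
    exact Submodule.add_mem _ (Submodule.smul_mem _ _ ⟨_, rfl⟩) (hE _)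
  have hker : Module.finrank ℝ (LinearMap.ker Φ) = 1 := by
    have h1 := LinearMap.finrank_range_add_finrank_ker Φ
    rw [hsurj, finrank_top, Module.finrank_prod, finrank_euclideanSpace_fin] at h1
    simp at h1
    omega
  obtain ⟨⟨Δ, hΔ⟩, hne, hall⟩ := finrank_eq_one_iff'.1 hker
  have hmem : ∀ w, w ∈ LinearMap.ker Φ ↔ AffDep x w := by
    intro w
    rw [LinearMap.mem_ker, hΦ, Prod.mk_eq_zero]; rfl
  refine ⟨Δ, fun h => hne (Subtype.ext h), (hmem _).1 hΔ, fun w hw => ?_⟩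
  obtain ⟨c, hc⟩ := hall ⟨w, (hmem _).2 hw⟩
  refine ⟨c, fun i => ?_⟩
  have := congrFun (congrArg Subtype.val hc) i
  exact this.symm

/-- The kernel of the bordered matrix consists of affine dependencies. -/
theorem affDep_of_ker {n : ℕ} (hn : 2 ≤ n) (x : Fin n → EuclideanSpace ℝ (Fin (n - 2)))
    (hd : confDim x = n - 2) (v : Option (Fin n) → ℝ)
    (hv : (bmat fun i j => dist (x i) (x j)).mulVec v = 0) : AffDep x (fun i => v (some i)) := by
  have e0 := congrFun hv none
  simp only [Matrix.mulVec, dotProduct, Fintype.sum_option, bmat] at e0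
  simp at e0
  have e1 : ∀ i, v none + ∑ j, dist (x i) (x j) ^ 2 * v (some j) = 0 := by
    intro i
    have e := congrFun hv (some i)
    simp only [Matrix.mulVec, dotProduct, Fintype.sum_option, bmat] at e
    simpa using e
  refine ⟨e0, ?_⟩
  set V := ∑ i, v (some i) • x i with hV
  have e2 : ∀ i, ∑ j, dist (x i) (x j) ^ 2 * v (some j)
      = -2 * inner ℝ (x i) V + ∑ j, v (some j) * ‖x j‖ ^ 2 := by
    intro i
    have : ∀ j, dist (x i) (x j) ^ 2 * v (some j) = ‖x i‖ ^ 2 * v (some j)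
        + -2 * (v (some j) * inner ℝ (x i) (x j)) + v (some j) * ‖x j‖ ^ 2 := by
      intro j
      rw [dist_eq_norm, norm_sub_sq_real]; ring
    simp only [this, Finset.sum_add_distrib, ← Finset.mul_sum, e0]
    rw [hV, inner_sum]
    simp only [inner_smul_right]
    ring
  let i0 : Fin n := ⟨0, by omega⟩
  have e3 : ∀ i, inner ℝ V (x i - x i0) = 0 := by
    intro i
    have h1 := e1 i
    have h2 := e1 i0
    rw [e2] at h1 h2
    rw [inner_sub_right, real_inner_comm, real_inner_comm (x i0)]
    linarith
  have e4 : V ∈ (Submodule.span ℝ (Set.range fun i => x i - x i0))ᗮ := by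
    rw [Submodule.mem_orthogonal']
    intro u hu
    induction hu using Submodule.span_induction with
    | mem u h => obtain ⟨i, rfl⟩ := h; exact e3 i
    | zero => simp
    | add a b _ _ ha hb => rw [inner_add_right, ha, hb, add_zero]
    | smul c a _ ha => rw [inner_smul_right, ha, mul_zero]
  rw [span_top x hd, Submodule.top_orthogonal_eq_bot] at e4
  exact e4

theorem ker_of_affDep {d n : ℕ} (x : Fin n → EuclideanSpace ℝ (Fin d))
    (w : Fin n → ℝ) (hw : AffDep x w) :
    (bmat fun i j => dist (x i) (x j)).mulVec
      (fun o => Option.elim o (-∑ j, w j * ‖x j‖ ^ 2) w) = 0 := by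
  obtain ⟨e0, hV⟩ := hw
  ext i
  cases i with
  | none =>
    simp only [Matrix.mulVec, dotProduct, Fintype.sum_option, bmat]
    simpa using e0
  | some i =>
    simp only [Matrix.mulVec, dotProduct, Fintype.sum_option, bmat]
    simp only [Matrix.of_apply, Option.elim, one_mul, Pi.zero_apply]
    have : ∀ j, dist (x i) (x j) ^ 2 * w j = ‖x i‖ ^ 2 * w j
        + -2 * (w j * inner ℝ (x i) (x j)) + w j * ‖x j‖ ^ 2 := by
      intro j
      rw [dist_eq_norm, norm_sub_sq_real]; ring
    simp only [this, Finset.sum_add_distrib, ← Finset.mul_sum, e0]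
    have h2 : ∑ j, w j * inner ℝ (x i) (x j) = 0 := by
      have : inner ℝ (x i) (∑ j, w j • x j) = ∑ j, w j * inner ℝ (x i) (x j) := by
        rw [inner_sum]; simp only [inner_smul_right]
      rw [← this, hV, inner_zero_right]
    rw [h2]; ring

theorem bmat_symm {n : ℕ} (r : Fin n → Fin n → ℝ) (hr : ∀ i j, r i j = r j i) :
    (bmat r).transpose = bmat r := by
  ext i j
  cases i <;> cases j <;> simp [bmat]
  rw [hr]

/-- Cramer rule for a one dimensional kernel of a symmetric matrix -/
theorem exists_cof {n : ℕ} (r : Fin n → Fin n → ℝ) (hr : ∀ i j, r i j = r j i)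
    (v : Option (Fin n) → ℝ) (hv0 : v ≠ 0) (hv : (bmat r).mulVec v = 0)
    (huniq : ∀ u, (bmat r).mulVec u = 0 → ∃ c : ℝ, u = c • v) :
    ∃ (j0 : Option (Fin n)) (t : ℝ), ∀ i, v i = t * cof j0 r i := by
  obtain ⟨j0, hj0⟩ := Function.ne_iff.1 hv0
  simp only [Pi.zero_apply] at hj0
  set B' := (bmat r).updateRow j0 (Pi.single j0 1) with hB'
  have hrow : ∀ u, B'.mulVec u j0 = u j0 := by
    intro u
    simp [hB', Matrix.mulVec, Matrix.updateRow_self]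
  have hrow' : ∀ u i, i ≠ j0 → B'.mulVec u i = (bmat r).mulVec u i := by
    intro u i hi
    simp [hB', Matrix.mulVec, Matrix.updateRow_ne hi]
  have hdet : B'.det ≠ 0 := by
    intro h
    obtain ⟨u, hu, hBu⟩ := Matrix.exists_mulVec_eq_zero_iff.2 h
    have h1 : u j0 = 0 := by rw [← hrow u, hBu]; rfl
    have h2 : ∀ i, i ≠ j0 → (bmat r).mulVec u i = 0 := by
      intro i hi; rw [← hrow' u i hi, hBu]; rfl
    have h3 : dotProduct v ((bmat r).mulVec u) = 0 := by
      rw [Matrix.dotProduct_mulVec, ← Matrix.mulVec_transpose, bmat_symm r hr, hv, zero_dotProduct]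
    have h4 : dotProduct v ((bmat r).mulVec u) = v j0 * (bmat r).mulVec u j0 := by
      unfold dotProduct
      refine Finset.sum_eq_single j0 (fun i _ hi => by rw [h2 i hi, mul_zero]) (by simp)
    have h5 : (bmat r).mulVec u = 0 := by
      ext i
      by_cases hi : i = j0
      · subst hi
        rw [h4] at h3
        exact (mul_eq_zero.1 h3).resolve_left hj0
      · exact h2 i hi
    obtain ⟨c, hc⟩ := huniq u h5
    have h6 : c * v j0 = 0 := by
      have := congrFun hc j0
      rw [h1] at this
      simpa using this.symm
    have h7 : c = 0 := (mul_eq_zero.1 h6).resolve_right hj0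
    exact hu (by rw [hc, h7, zero_smul])
  refine ⟨j0, v j0 / B'.det, fun i => ?_⟩
  have hBv : B'.mulVec v = v j0 • Pi.single j0 1 := by
    ext i
    by_cases hi : i = j0
    · subst hi; rw [hrow]; simp
    · rw [hrow' v i hi, hv]; simp [hi]
  have h1 : B'.adjugate.mulVec (B'.mulVec v) = B'.det • v := by
    rw [Matrix.mulVec_mulVec, Matrix.adjugate_mul, Matrix.smul_mulVec, Matrix.one_mulVec]
  rw [hBv, Matrix.mulVec_smul, Matrix.mulVec_single_one] at h1
  have h2 := congrFun h1 i
  simp only [Pi.smul_apply, smul_eq_mul, Matrix.col_apply] at h2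
  have h3 : cof j0 r i = B'.adjugate i j0 := rfl
  rw [h3, div_mul_eq_mul_div, h2, mul_div_cancel_left₀ _ hdet]

theorem geom {n : ℕ} (hn : 2 ≤ n) (c2 : ℤ) (m : Fin n → ℝ) (hm : ∀ i, 0 < m i)
    (x : Fin n → EuclideanSpace ℝ (Fin (n - 2)))
    (hc : IsCentralConfig c2 m (∑ i, m i) x) (hd : confDim x = n - 2) :
    ∃ (k : Bool) (z : Fin n → ℝ) (t : ℝ) (j0 : Option (Fin n)),
      (∀ i j, i ≠ j → dist (x i) (x j) ^ c2 = 1 + (if k then 1 else -1) * z i * z j) ∧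
      (∀ i, z i * m i = t * cof j0 (fun i j => dist (x i) (x j)) (some i)) ∧
      (bmat fun i j => dist (x i) (x j)).det = 0 := by
  obtain ⟨Δ, hΔ0, hΔ, huniq⟩ := exists_dep hn x hd
  set r : Fin n → Fin n → ℝ := fun i j => dist (x i) (x j) with hr
  let v : Option (Fin n) → ℝ := fun o => Option.elim o (-∑ j, Δ j * ‖x j‖ ^ 2) Δ
  have hv : (bmat r).mulVec v = 0 := ker_of_affDep x Δ hΔ
  obtain ⟨a, ha⟩ := Function.ne_iff.1 hΔ0
  simp only [Pi.zero_apply] at ha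
  have hv0 : v ≠ 0 := fun h => ha (congrFun h (some a))
  have hMpos : 0 < ∑ i, m i := Finset.sum_pos (fun i _ => hm i) ⟨a, Finset.mem_univ a⟩
  have hvu : ∀ u, (bmat r).mulVec u = 0 → ∃ c : ℝ, u = c • v := by
    intro u hu
    obtain ⟨c, hc⟩ := huniq _ (affDep_of_ker hn x hd u hu)
    refine ⟨c, ?_⟩
    have h1 : (bmat r).mulVec (u - c • v) = 0 := by
      rw [Matrix.mulVec_sub, Matrix.mulVec_smul, hu, hv]; simp
    have h2 := congrFun h1 (some a)
    simp only [Matrix.mulVec, dotProduct, Fintype.sum_option, bmat] at h2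
    simp [v, hc] at h2
    ext o
    cases o with
    | none => simp only [v, Option.elim, Pi.smul_apply, smul_eq_mul]; linarith
    | some i => exact hc i
  obtain ⟨j0, t, ht⟩ := exists_cof r (fun i j => dist_comm _ _) v hv0 hv hvu
  -- rank one
  have hS : ∀ j, ∃ c : ℝ, ∀ i, i ≠ j → m i * (r i j ^ c2 - 1) = c * Δ i := by
    intro j
    let s : Fin n → ℝ := fun i => if i = j then 0 else m i * (r i j ^ c2 - 1)
    let w : Fin n → ℝ := fun i => s i - if i = j then ∑ l, s l else 0
    have hs : ∑ i, s i • (x i - x j) = 0 := by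
      have h1 := hc j
      have h2 : ∑ i ∈ Finset.univ \ {j}, (m i * dist (x i) (x j) ^ c2) • (x i - x j)
          = ∑ i, (m i * dist (x i) (x j) ^ c2) • (x i - x j) := by
        apply Finset.sum_subset (Finset.subset_univ _)
        intro i _ hi
        have : i = j := by simpa using hi
        subst this; simp
      have h3 : (∑ i, m i) • (x j - (∑ i, m i)⁻¹ • ∑ i, m i • x i)
          = - ∑ i, m i • (x i - x j) := by
        rw [smul_sub, smul_smul, mul_inv_cancel₀ hMpos.ne', one_smul]
        simp only [smul_sub, Finset.sum_sub_distrib, ← Finset.sum_smul]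
        abel
      rw [h2, h3, ← sub_eq_add_neg, ← Finset.sum_sub_distrib] at h1
      rw [← h1]
      refine Finset.sum_congr rfl fun i _ => ?_
      by_cases hij : i = j
      · subst hij; simp
      · simp only [s, hij, if_false, hr]
        rw [← sub_smul]; congr 1; ring
    have hw : AffDep x w := by
      constructor
      · simp [w]
      · simp only [smul_sub, Finset.sum_sub_distrib, ← Finset.sum_smul] at hs
        simp only [w, sub_smul, Finset.sum_sub_distrib, ite_smul, zero_smul]
        simpa using hs
    obtain ⟨c, hcw⟩ := huniq w hw
    refine ⟨c, fun i hij => ?_⟩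
    rw [← hcw i]
    simp [w, s, hij]
  choose c hcS using hS
  have hsym : ∀ i j, (m j * c j) * Δ i = (m i * c i) * Δ j := by
    intro i j
    by_cases hij : i = j
    · subst hij; rfl
    · have h1 := hcS j i hij
      have h2 := hcS i j (Ne.symm hij)
      have h3 : r i j = r j i := dist_comm _ _
      rw [h3] at h1
      linear_combination (-m j) * h1 + m i * h2
  set κ := m a * c a / Δ a with hκ
  have hrank : ∀ i j, i ≠ j → m i * m j * (r i j ^ c2 - 1) = κ * Δ i * Δ j := by
    intro i j hij
    have h1 := hcS j i hij
    have h2 := hsym a j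
    have h3 : m j * c j = κ * Δ j := by
      rw [hκ]; field_simp; linarith
    linear_combination m j * h1 + Δ i * h3
  have hk : ∃ k : Bool, κ = (if k then 1 else -1) * (√|κ|) ^ 2 := by
    rw [Real.sq_sqrt (abs_nonneg _)]
    rcases le_total 0 κ with h | h
    · exact ⟨true, by simp [abs_of_nonneg h]⟩
    · exact ⟨false, by simp [abs_of_nonpos h]⟩
  obtain ⟨k, hk⟩ := hk
  set s := √|κ| with hs
  refine ⟨k, fun i => s * Δ i / m i, s * t, j0, ?_, ?_, Matrix.exists_mulVec_eq_zero_iff.1 ⟨v, hv0, hv⟩⟩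
  · intro i j hij
    have h1 := hrank i j hij
    rw [hk] at h1
    have hi := (hm i).ne'
    have hj := (hm j).ne'
    have h2 : r i j ^ c2 - 1 = (if k then 1 else -1) * (s * Δ i / m i) * (s * Δ j / m j) := by
      field_simp
      linear_combination h1
    change r i j ^ c2 = _
    linarith
  · intro i
    have hi := (hm i).ne'
    have h1 : Δ i = t * cof j0 r (some i) := ht (some i)
    rw [div_mul_cancel₀ _ hi, h1, mul_assoc]

end CC

/-- Let `n ≥ 4` and let `a` be a nonzero semi-integer (`c2 = 2a`).
Then there exists a proper real algebraic subset `B ⊊ ℝ^n` (the common zero set of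
finitely many nonzero real polynomials) such that for every mass vector
`m ∈ ℝ^n \ B` with all `m_i > 0`, there are only finitely many `(n−2)`-dimensional
central configurations with masses `m` for the potential `U_a` up to symmetry:
the set of their mutual-distance vectors (with the normalization `λ = M`) is finite. -/
theorem statement18 {n : ℕ} (hn : 4 ≤ n) (c2 : ℤ) (hc2 : c2 ≠ 0) :
    ∃ B : Set (Fin n → ℝ),
      (∃ T : Finset (MvPolynomial (Fin n) ℝ), (∀ p ∈ T, p ≠ 0) ∧
        B = {m | ∀ p ∈ T, MvPolynomial.eval m p = 0}) ∧
      B ≠ Set.univ ∧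
      ∀ m : Fin n → ℝ, m ∉ B → (∀ i, 0 < m i) → (ccDistSet n c2 m).Finite := by
  classical
  have hrel := fun τ : Bool × Finset (Fin n) × Option (Fin n) =>
    exists_relation (n := n) (by omega) c2 hc2 (if τ.1 then 1 else -1) τ.2.1
  choose q hq hq' using hrel
  have hpol := fun τ : Bool × Finset (Fin n) × Option (Fin n) =>
    exists_p (n := n) c2 hc2 (if τ.1 then 1 else -1) τ.2.1 τ.2.2 (q τ) (hq τ)
  choose p hp hp' using hpol
  have hP : (∏ τ, p τ) ≠ 0 := Finset.prod_ne_zero_iff.2 fun τ _ => hp τ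
  refine ⟨{m | ∀ f ∈ ({∏ τ, p τ} : Finset (MvPolynomial (Fin n) ℝ)),
    MvPolynomial.eval m f = 0}, ⟨{∏ τ, p τ}, ?_, rfl⟩, ?_, ?_⟩
  · intro f hf
    rw [Finset.mem_singleton] at hf
    rw [hf]; exact hP
  · intro h
    apply hP
    apply MvPolynomial.funext
    intro m
    have hm : m ∈ {m | ∀ f ∈ ({∏ τ, p τ} : Finset (MvPolynomial (Fin n) ℝ)),
      MvPolynomial.eval m f = 0} := by rw [h]; trivial
    rw [map_zero]
    exact hm _ (Finset.mem_singleton_self _)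
  · intro m hm hpos
    have hne : ∀ τ, MvPolynomial.eval m (p τ) ≠ 0 := by
      intro τ h0
      apply hm
      intro f hf
      rw [Finset.mem_singleton] at hf
      rw [hf, map_prod]
      exact Finset.prod_eq_zero (Finset.mem_univ τ) h0
    refine (Set.finite_iUnion fun τ => hp' τ m (hne τ)).subset ?_
    rintro rv ⟨x, hinj, hcc, hdim, hrv⟩
    obtain ⟨k, z, t, j0, h1, h2, h3⟩ := geom (by omega) c2 m hpos x hcc hdim
    rw [Set.mem_iUnion]
    have hpos' : ∀ i j, i ≠ j → 0 < dist (x i) (x j) := fun i j hij =>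
      dist_pos.2 fun h => hij (hinj h)
    have hout : ∀ i, i ∉ Finset.univ.filter (fun i => z i ≠ 0) → z i = 0 := by
      intro i hi; simpa using hi
    refine ⟨(k, Finset.univ.filter (fun i => z i ≠ 0), j0), z,
      fun i j => dist (x i) (x j), t, ?_, hrv⟩
    have hqz := hq' (k, Finset.univ.filter (fun i => z i ≠ 0), j0) z
      (fun i j => dist (x i) (x j)) hout (fun i => dist_self (x i)) hpos' h1 h3
    exact
      { zin := fun i hi => (Finset.mem_filter.1 hi).2
        zout := hout
        r0 := fun i => dist_self (x i)
        rpos := hpos'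
        rz := h1
        hm := h2
        hq := hqz }
end

section
/- Let n ≥ 4, let a be a semi-integer (2a ∈ ℤ, a ≠ 0), let q = n(n−1)/2, and set β = max{−2a+2, 2n} if a < 0 and β = max{2a, 2n} if a > 0. Then there exists a proper real algebraic subset B ⊊ ℝ^n such that for every mass vector m = (m_1, …, m_n) ∈ ℝ^n \ B with all m_i > 0, the number of (n−2)-dimensional central configurations with masses m for the potential U_a up to symmetry — equivalently, the number of mutual-distance vectors (r_{ij}) ∈ ℝ^q of (n−2)-dimensional central configurations with masses m, exponent a, and multiplier normalized by λ = M — is at most β(2β−1)^{q+n}. -/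
/-- `β = max{−2a+2, 2n}` if `a < 0` and `β = max{2a, 2n}` if `a > 0` (with `c2 = 2a`). -/
def betaBound (n : ℕ) (c2 : ℤ) : ℕ :=
  if c2 < 0 then max (2 - c2).toNat (2 * n) else max c2.toNat (2 * n)


/-- Span of the monomials in the generators `g` with exponents bounded by `A`. -/
def boxSpan {τ R : Type*} [Fintype τ] [CommRing R] [Algebra ℝ R] (g : τ → R) (A : τ → ℕ) :
    Submodule ℝ R :=
  Submodule.span ℝ ((fun f : τ → ℕ => ∏ i, g i ^ f i) '' Set.Iic A)

section Box
variable {τ R : Type*} [Fintype τ] [CommRing R] [Algebra ℝ R] {g : τ → R}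

lemma boxSpan_mono {A B : τ → ℕ} (h : A ≤ B) : boxSpan g A ≤ boxSpan g B :=
  Submodule.span_mono (Set.image_mono (Set.Iic_subset_Iic.2 h))

lemma boxSpan_mul {A B : τ → ℕ} {x y : R} (hx : x ∈ boxSpan g A) (hy : y ∈ boxSpan g B) :
    x * y ∈ boxSpan g (A + B) := by
  have h := Submodule.mul_mem_mul hx hy
  unfold boxSpan at h
  rw [Submodule.span_mul_span] at h
  refine Submodule.span_mono ?_ h
  rintro _ ⟨_, ⟨a, ha, rfl⟩, _, ⟨b, hb, rfl⟩, rfl⟩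
  refine ⟨a + b, Set.mem_Iic.2 (add_le_add (Set.mem_Iic.1 ha) (Set.mem_Iic.1 hb)), ?_⟩
  simp [pow_add, Finset.prod_mul_distrib]

lemma boxSpan_monomial {A : τ → ℕ} {f : τ → ℕ} (hf : f ≤ A) :
    ∏ i, g i ^ f i ∈ boxSpan g A :=
  Submodule.subset_span ⟨f, hf, rfl⟩

lemma boxSpan_one (A : τ → ℕ) : (1 : R) ∈ boxSpan g A := by
  have := boxSpan_monomial (g := g) (A := A) (f := 0) (fun _ => Nat.zero_le _)
  simpa using this

lemma boxSpan_const (A : τ → ℕ) (c : ℝ) : algebraMap ℝ R c ∈ boxSpan g A := by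
  rw [Algebra.algebraMap_eq_smul_one]
  exact Submodule.smul_mem _ _ (boxSpan_one A)

lemma boxSpan_gen {A : τ → ℕ} (i : τ) (hi : 1 ≤ A i) : g i ∈ boxSpan g A := by
  classical
  have := boxSpan_monomial (g := g) (A := A) (f := Pi.single i 1) (by
    intro j
    by_cases h : j = i
    · subst h; simpa using hi
    · simp [h])
  rw [Finset.prod_eq_single i] at this
  · simpa using this
  · intro j _ hj; simp [hj]
  · simp

lemma boxSpan_pow {A : τ → ℕ} {x : R} (hx : x ∈ boxSpan g A) (k : ℕ) :
    x ^ k ∈ boxSpan g (k • A) := by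
  induction k with
  | zero => simpa using boxSpan_one _
  | succ k ih => rw [pow_succ, succ_nsmul]; exact boxSpan_mul ih hx

lemma boxSpan_prod {ι : Type*} (s : Finset ι) {A : ι → τ → ℕ} {x : ι → R}
    (hx : ∀ i ∈ s, x i ∈ boxSpan g (A i)) :
    ∏ i ∈ s, x i ∈ boxSpan g (∑ i ∈ s, A i) := by
  classical
  induction s using Finset.induction_on with
  | empty => simpa using boxSpan_one _
  | insert a s ha ih =>
    rw [Finset.prod_insert ha, Finset.sum_insert ha]
    exact boxSpan_mul (hx a (Finset.mem_insert_self _ _))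
      (ih fun i hi => hx i (Finset.mem_insert_of_mem hi))

lemma boxSpan_set_finite (A : τ → ℕ) :
    ((fun f : τ → ℕ => ∏ i, g i ^ f i) '' Set.Iic A).Finite := by
  classical
  exact (Set.finite_Iic A).image _

instance boxSpan_finite (A : τ → ℕ) : FiniteDimensional ℝ (boxSpan g A) :=
  FiniteDimensional.span_of_finite ℝ (boxSpan_set_finite A)

lemma boxSpan_finrank (A : τ → ℕ) : Module.finrank ℝ (boxSpan g A) ≤ ∏ i, (A i + 1) := by
  classical
  have h : ((fun f : τ → ℕ => ∏ i, g i ^ f i) '' Set.Iic A)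
      = (((Finset.Iic A).image (fun f : τ → ℕ => ∏ i, g i ^ f i) : Finset R) : Set R) := by
    simp
  unfold boxSpan
  rw [h]
  refine (finrank_span_finset_le_card _).trans (Finset.card_image_le.trans ?_)
  rw [Pi.card_Iic]
  simp

end Box

/-- Key dependence lemma. -/
lemma rel_of_count {R : Type*} [CommRing R] [Algebra ℝ R] {n s : ℕ} (m : Fin n → R) (F : R)
    (hF : F ∈ nonZeroDivisors R) (G : Fin (s + 1) → R) (k : ℕ) (W : Submodule ℝ R)
    [FiniteDimensional ℝ W]
    (hW : ∀ i (α : Fin n → Fin k) (γ : Fin k), F ^ (γ : ℕ) * ((∏ j, m j ^ (α j : ℕ)) * G i) ∈ W)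
    (hcard : Module.finrank ℝ W < (s + 1) * k ^ (n + 1)) :
    ∃ c : Fin (s + 1) → MvPolynomial (Fin n) ℝ, c ≠ 0 ∧
      ∃ H, ∑ i, MvPolynomial.aeval m (c i) * G i = F * H := by
  classical
  let I := Fin k × (Fin n → Fin k) × Fin (s + 1)
  let v : I → R := fun t => F ^ (t.1 : ℕ) * ((∏ j, m j ^ (t.2.1 j : ℕ)) * G t.2.2)
  have hdep : ¬ LinearIndependent ℝ v := by
    intro hli
    let v' : I → W := fun t => ⟨v t, hW _ _ _⟩
    have hli' : LinearIndependent ℝ v' := LinearIndependent.of_comp W.subtype hli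
    have := hli'.fintype_card_le_finrank
    have hc : Fintype.card I = (s + 1) * k ^ (n + 1) := by
      simp [I, pow_succ]; ring
    omega
  rw [Fintype.not_linearIndependent_iff] at hdep
  obtain ⟨a, ha, ⟨γ1, α1, i1⟩, hne⟩ := hdep
  let c : ℕ → Fin (s + 1) → MvPolynomial (Fin n) ℝ := fun γ i =>
    if h : γ < k then ∑ α : Fin n → Fin k,
      MvPolynomial.monomial (Finsupp.equivFunOnFinite.symm (fun j => (α j : ℕ))) (a (⟨γ, h⟩, α, i))
    else 0
  have hcne : ∃ γ, c γ ≠ 0 := by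
    refine ⟨γ1, fun h => hne ?_⟩
    have h1 := congrArg (MvPolynomial.coeff
      (Finsupp.equivFunOnFinite.symm (fun j => (α1 j : ℕ)))) (congrFun h i1)
    simp only [c, γ1.2, dif_pos, MvPolynomial.coeff_sum, MvPolynomial.coeff_monomial,
      Pi.zero_apply, MvPolynomial.coeff_zero] at h1
    rw [Finset.sum_eq_single α1] at h1
    · simpa using h1
    · intro b _ hb
      rw [if_neg]
      intro h2
      apply hb
      have := Finsupp.equivFunOnFinite.symm.injective h2
      funext j
      exact Fin.ext (congrFun this j)
    · simp
  have hsum : ∑ γ ∈ Finset.range k, F ^ γ * ∑ i, MvPolynomial.aeval m (c γ i) * G i = 0 := by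
    rw [← ha, Finset.sum_range, Fintype.sum_prod_type]
    refine Finset.sum_congr rfl fun γ _ => ?_
    rw [Fintype.sum_prod_type, Finset.sum_comm, Finset.mul_sum]
    refine Finset.sum_congr rfl fun i _ => ?_
    simp only [c, γ.2, dif_pos, map_sum, Finset.sum_mul, Finset.mul_sum]
    refine Finset.sum_congr rfl fun α _ => ?_
    rw [MvPolynomial.aeval_monomial, Finsupp.prod_fintype _ _ (by simp)]
    simp only [v, Finsupp.equivFunOnFinite_symm_apply_apply, Algebra.smul_def, Fin.eta]
    ring
  let γ0 := Nat.find hcne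
  have h0 : c γ0 ≠ 0 := Nat.find_spec hcne
  have hlt : ∀ γ < γ0, c γ = 0 := fun γ h => not_not.1 (Nat.find_min hcne h)
  have hγk : γ0 < k := by
    by_contra h
    apply h0
    funext i
    simp [c, h]
  refine ⟨c γ0, h0, - ∑ γ ∈ Finset.range (k - γ0 - 1), F ^ γ *
    ∑ i, MvPolynomial.aeval m (c (γ + γ0 + 1) i) * G i, ?_⟩
  obtain ⟨d, hd⟩ : ∃ d, k = γ0 + (1 + d) := ⟨k - γ0 - 1, by omega⟩
  rw [hd, Finset.sum_range_add, Finset.sum_eq_zero (s := Finset.range γ0), zero_add,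
    Finset.sum_range_add] at hsum
  swap
  · intro γ hγ
    rw [hlt γ (Finset.mem_range.1 hγ)]; simp
  have hd2 : k - γ0 - 1 = d := by omega
  rw [hd2]
  have hFp := pow_mem hF γ0
  have key : F ^ γ0 * ((∑ i, MvPolynomial.aeval m (c γ0 i) * G i) + F *
      ∑ γ ∈ Finset.range d, F ^ γ * ∑ i, MvPolynomial.aeval m (c (γ + γ0 + 1) i) * G i) = 0 := by
    rw [← hsum]
    simp only [Finset.range_one, Finset.sum_singleton, add_zero, mul_add]
    congr 1
    rw [Finset.mul_sum, Finset.mul_sum]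
    refine Finset.sum_congr rfl fun γ _ => ?_
    rw [show γ0 + (1 + γ) = γ + γ0 + 1 by ring]
    ring
  have := (mul_right_mem_nonZeroDivisors_eq_zero_iff hFp).1 (by rw [mul_comm]; exact key)
  linear_combination this

/-- Generic bound for the number of points in a fibre. -/
lemma fibre_bound {R : Type*} [CommRing R] [Algebra ℝ R] {n s : ℕ} (m : Fin n → R) (F : R)
    (hF : F ∈ nonZeroDivisors R) {τ : Type*} [Fintype τ] [Nonempty τ] (g : τ → R)
    (hcount : ∀ c0 : τ → ℕ, ∃ (k : ℕ) (B : τ → ℕ),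
      (∀ f ∈ boxSpan g c0, ∀ (α : Fin n → Fin k) (γ : Fin k),
        F ^ (γ : ℕ) * ((∏ j, m j ^ (α j : ℕ)) * f) ∈ boxSpan g B) ∧
      Module.finrank ℝ (boxSpan g B) < (s + 1) * k ^ (n + 1)) :
    ∃ h : MvPolynomial (Fin n) ℝ, h ≠ 0 ∧ ∀ m0 : Fin n → ℝ, MvPolynomial.eval m0 h ≠ 0 →
      ∀ φ : Fin (s + 1) → (R →ₐ[ℝ] ℝ), (∀ j, φ j F = 0) → (∀ j i, φ j (m i) = m0 i) →
        (∀ j j', j ≠ j' → ∃ t, φ j (g t) ≠ φ j' (g t)) → False := by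
  classical
  let K := MvPolynomial (Fin n) ℝ
  let c0 : τ → ℕ := fun _ => s
  let T := Set.Iic c0
  have : Fintype T := (Set.finite_Iic c0).fintype
  let Q := R ⧸ Ideal.span {F}
  let _ : Module K Q := Module.compHom Q (MvPolynomial.aeval m : K →ₐ[ℝ] R).toRingHom
  let mon : T → R := fun f => ∏ i, g i ^ f.1 i
  let v : T → Q := fun f => Ideal.Quotient.mk _ (mon f)
  have hsmul : ∀ (c : K) (x : R), c • (Ideal.Quotient.mk (Ideal.span {F}) x : Q)
      = Ideal.Quotient.mk _ (MvPolynomial.aeval m c * x) := by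
    intro c x
    rfl
  obtain ⟨I, hI, hmax⟩ := exists_maximal_linearIndepOn K v
  have hIcard : Fintype.card I ≤ s := by
    by_contra hlt
    push Not at hlt
    obtain ⟨emb⟩ : Nonempty (Fin (s + 1) ↪ I) :=
      Function.Embedding.nonempty_of_card_le (by simpa using hlt)
    obtain ⟨k, B, hB, hlt⟩ := hcount c0
    obtain ⟨c, hc, H, hH⟩ := rel_of_count m F hF (fun i => mon (emb i)) k (boxSpan g B)
      (fun i α γ => hB _ (boxSpan_monomial (emb i).1.2) α γ) hlt
    have hli : LinearIndependent K (fun i => v (emb i)) :=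
      LinearIndependent.comp hI emb emb.injective
    rw [Fintype.linearIndependent_iff] at hli
    apply hc
    funext i
    refine hli c ?_ i
    simp only [v, hsmul]
    rw [← map_sum, hH, Ideal.Quotient.eq_zero_iff_mem]
    exact Ideal.mul_mem_right _ _ (Ideal.subset_span rfl)
  have hmax' : ∀ t : T, ∃ a : K, a ≠ 0 ∧ a • v t ∈ Submodule.span K (v '' I) := by
    intro t
    by_cases ht : t ∈ I
    · exact ⟨1, one_ne_zero, by rw [one_smul]; exact Submodule.subset_span ⟨t, ht, rfl⟩⟩
    · exact hmax t ht
  choose a ha0 ha using hmax'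
  refine ⟨∏ t, a t, Finset.prod_ne_zero_iff.2 fun t _ => ha0 t, ?_⟩
  intro m0 hm0 φ hφF hφm hsep
  have ham0 : ∀ t, MvPolynomial.eval m0 (a t) ≠ 0 := by
    intro t
    rw [map_prod] at hm0
    exact Finset.prod_ne_zero_iff.1 hm0 t (Finset.mem_univ _)
  have hφeval : ∀ j (p : K), φ j (MvPolynomial.aeval m p) = MvPolynomial.eval m0 p := by
    intro j p
    have : (φ j).comp (MvPolynomial.aeval m) = MvPolynomial.aeval m0 := by
      apply MvPolynomial.algHom_ext
      intro i
      simp [hφm]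
    have h2 := DFunLike.congr_fun this p
    exact h2
  obtain ⟨lam, hlam0, hlam⟩ : ∃ lam : Fin (s + 1) → ℝ, lam ≠ 0 ∧
      ∀ t ∈ I, ∑ j, lam j * φ j (mon t) = 0 := by
    let L : (Fin (s + 1) → ℝ) →ₗ[ℝ] (I → ℝ) :=
      LinearMap.pi fun t => ∑ j, (φ j (mon t)) • LinearMap.proj j
    have : LinearMap.ker L ≠ ⊥ := by
      apply LinearMap.ker_ne_bot_of_finrank_lt
      simp only [Module.finrank_fintype_fun_eq_card, Fintype.card_fin]
      omega
    obtain ⟨x, hx, hx0⟩ := Submodule.exists_mem_ne_zero_of_ne_bot this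
    refine ⟨x, hx0, fun t ht => ?_⟩
    have := congrFun (LinearMap.mem_ker.1 hx) ⟨t, ht⟩
    simp [L, LinearMap.pi_apply] at this
    rw [← this]
    exact Finset.sum_congr rfl fun j _ => mul_comm _ _
  have hlamT : ∀ t, ∑ j, lam j * φ j (mon t) = 0 := by
    intro t
    have hspan : ∀ y ∈ Submodule.span K (v '' I), ∀ x : R,
        (Ideal.Quotient.mk (Ideal.span {F}) x : Q) = y → ∑ j, lam j * φ j x = 0 := by
      have hwd : ∀ x x' : R, (Ideal.Quotient.mk (Ideal.span {F}) x : Q) =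
          Ideal.Quotient.mk (Ideal.span {F}) x' → ∀ j, φ j x = φ j x' := by
        intro x x' h j
        rw [Ideal.Quotient.eq, Ideal.mem_span_singleton] at h
        obtain ⟨d, hd⟩ := h
        have := congrArg (φ j) hd
        rw [map_sub, map_mul, hφF, zero_mul] at this
        linarith
      intro y hy
      induction hy using Submodule.span_induction with
      | mem y hy =>
        obtain ⟨t, ht, rfl⟩ := hy
        intro x hx
        rw [← hlam t ht]
        exact Finset.sum_congr rfl fun j _ => by rw [hwd _ _ hx j]
      | zero =>
        intro x hx
        refine Finset.sum_eq_zero fun j _ => ?_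
        rw [hwd x 0 (by simpa using hx) j]; simp
      | add y z _ _ h1 h2 =>
        intro x hx
        obtain ⟨y', hy'⟩ := Ideal.Quotient.mk_surjective y
        obtain ⟨z', hz'⟩ := Ideal.Quotient.mk_surjective z
        have e1 := h1 y' hy'
        have e2 := h2 z' hz'
        have : ∀ j, φ j x = φ j y' + φ j z' := fun j => by
          rw [← map_add]; exact hwd _ _ (by rw [hx, ← hy', ← hz', map_add]) j
        simp only [this, mul_add, Finset.sum_add_distrib, e1, e2, add_zero]
      | smul p y _ h1 =>
        intro x hx
        obtain ⟨y', hy'⟩ := Ideal.Quotient.mk_surjective y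
        have e1 := h1 y' hy'
        have : ∀ j, φ j x = MvPolynomial.eval m0 p * φ j y' := fun j => by
          rw [← hφeval j p, ← map_mul]
          exact hwd _ _ (by rw [hx, ← hy', hsmul]) j
        simp only [this]
        rw [← mul_zero (MvPolynomial.eval m0 p), ← e1, Finset.mul_sum]
        exact Finset.sum_congr rfl fun j _ => by ring
    have h1 := hspan _ (ha t) (MvPolynomial.aeval m (a t) * mon t) (hsmul _ _).symm
    simp only [map_mul, hφeval] at h1
    have h2 : MvPolynomial.eval m0 (a t) * ∑ j, lam j * φ j (mon t) = 0 := by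
      rw [← h1, Finset.mul_sum]
      exact Finset.sum_congr rfl fun j _ => by ring
    exact (mul_eq_zero.1 h2).resolve_left (ham0 t)
  have hlamV : ∀ f ∈ boxSpan g c0, ∑ j, lam j * φ j f = 0 := by
    intro f hf
    induction hf using Submodule.span_induction with
    | mem f hf =>
      obtain ⟨t, ht, rfl⟩ := hf
      exact hlamT ⟨t, ht⟩
    | zero => simp
    | add x y _ _ h1 h2 => simp only [map_add, mul_add, Finset.sum_add_distrib, h1, h2, add_zero]
    | smul r x _ h1 =>
      simp only [map_smul, smul_eq_mul]
      rw [← mul_zero r, ← h1, Finset.mul_sum]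
      exact Finset.sum_congr rfl fun j _ => by ring
  apply hlam0
  funext j
  choose! t ht using hsep j
  let f : R := ∏ j' ∈ Finset.univ.erase j, (g (t j') - algebraMap ℝ R (φ j' (g (t j'))))
  have hf : f ∈ boxSpan g c0 := by
    have := boxSpan_prod (g := g) (Finset.univ.erase j) (A := fun _ _ => 1)
      (x := fun j' => g (t j') - algebraMap ℝ R (φ j' (g (t j'))))
      (fun j' _ => Submodule.sub_mem _ (boxSpan_gen _ le_rfl) (boxSpan_const _ _))
    refine boxSpan_mono ?_ this
    intro i
    simp [c0, Finset.sum_apply]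
  have h1 := hlamV f hf
  rw [Finset.sum_eq_single j] at h1
  · refine (mul_eq_zero.1 h1).resolve_right ?_
    simp only [f, map_prod]
    refine Finset.prod_ne_zero_iff.2 fun j' hj' => ?_
    rw [map_sub, AlgHom.commutes]
    have := ht j' (Finset.ne_of_mem_erase hj').symm
    exact sub_ne_zero.2 this
  · intro j' _ hj'
    have : φ j' f = 0 := by
      simp only [f, map_prod]
      refine Finset.prod_eq_zero (Finset.mem_erase.2 ⟨hj', Finset.mem_univ _⟩) ?_
      rw [map_sub, AlgHom.commutes]
      exact sub_self _
    rw [this, mul_zero]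
  · simp


lemma growth (D E C K n : ℕ) : ∃ t : ℕ, 0 < t ∧
    (D * t + C) ^ n * (E * t + C) * K < (D ^ n * E * K + 1) * t ^ (n + 1) := by
  have h1 : Filter.Tendsto (fun t : ℕ => (((D : ℝ) + C / t) ^ n * (E + C / t) * K))
      Filter.atTop (nhds (((D : ℝ) + 0) ^ n * (E + 0) * K)) := by
    have h0 : Filter.Tendsto (fun t : ℕ => (C : ℝ) / t) Filter.atTop (nhds 0) :=
      tendsto_const_div_atTop_nhds_zero_nat _
    exact ((((h0.const_add _).pow n).mul (h0.const_add _)).mul_const _)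
  have h2 := h1.eventually_lt_const (u := (D : ℝ) ^ n * E * K + 1) (by simp)
  obtain ⟨t, ht, ht0⟩ := (h2.and (Filter.eventually_gt_atTop 0)).exists
  refine ⟨t, ht0, ?_⟩
  have ht' : (0 : ℝ) < t := by exact_mod_cast ht0
  have h3 := mul_lt_mul_of_pos_right ht (pow_pos ht' (n + 1))
  have e1 : ((D : ℝ) + C / t) * t = D * t + C := by field_simp
  have e2 : ((E : ℝ) + C / t) * t = E * t + C := by field_simp
  have h4 : (((D : ℝ) * t + C) ^ n * (E * t + C) * K) < (D ^ n * E * K + 1) * t ^ (n + 1) := by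
    rw [← e1, ← e2, mul_pow]
    calc _ = ((D : ℝ) + C / t) ^ n * (E + C / t) * K * t ^ (n + 1) := by rw [pow_succ]; ring
      _ < _ := h3
  exact_mod_cast h4

/-- Index type of the generators. -/
abbrev GenIdx (n : ℕ) := Fin n ⊕ Unit ⊕ PairIdx n

/-- Exponent bounds. -/
def gbox (n a b c : ℕ) : GenIdx n → ℕ :=
  Sum.elim (fun _ => a) (Sum.elim (fun _ => b) (fun _ => c))

/-- Generators. -/
def gens {n : ℕ} {R : Type*} (u : Fin n → R) (w : R) (ρ : PairIdx n → R) : GenIdx n → R :=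
  Sum.elim u (Sum.elim (fun _ => w) ρ)

lemma gbox_mono {n a b c a' b' c' : ℕ} (ha : a ≤ a') (hb : b ≤ b') (hc : c ≤ c') :
    gbox n a b c ≤ gbox n a' b' c' := by
  rintro (i | i | i) <;> simpa [gbox]

lemma gbox_add {n a b c a' b' c' : ℕ} :
    gbox n a b c + gbox n a' b' c' = gbox n (a + a') (b + b') (c + c') := by
  funext i
  rcases i with (i | i | i) <;> simp [gbox]

lemma gbox_smul {n a b c k : ℕ} : k • gbox n a b c = gbox n (k * a) (k * b) (k * c) := by
  funext i
  rcases i with (i | i | i) <;> simp [gbox]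

lemma pair_count {n : ℕ} (j : Fin n) (d : ℕ) (f : PairIdx n → ℕ) (hf : ∀ p, f p ≤ d) :
    ∑ p : PairIdx n, f p * ((if p.1.1 = j then 1 else 0) + (if p.1.2 = j then 1 else 0)) ≤ n * d := by
  classical
  have h1 : ∑ p : PairIdx n, ((if p.1.1 = j then 1 else 0) + (if p.1.2 = j then 1 else 0)) ≤ n := by
    have : ∀ p : PairIdx n, ((if p.1.1 = j then 1 else 0) + (if p.1.2 = j then 1 else 0))
        = if (p.1.1 = j ∨ p.1.2 = j) then 1 else 0 := by
      intro p
      have := p.2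
      by_cases h1 : p.1.1 = j <;> by_cases h2 : p.1.2 = j <;> simp [h1, h2]
      rw [h1, h2] at this
      exact lt_irrefl _ this
    rw [Finset.sum_congr rfl fun p _ => this p, ← Finset.card_filter]
    have h2 := Finset.card_le_card_of_injOn
      (s := Finset.univ.filter fun p : PairIdx n => p.1.1 = j ∨ p.1.2 = j)
      (t := (Finset.univ : Finset (Fin n)))
      (fun p => if p.1.1 = j then p.1.2 else p.1.1) (fun _ _ => Finset.mem_coe.2 (Finset.mem_univ _)) ?_
    · simpa using h2
    · rintro ⟨⟨a, b⟩, hp⟩ h ⟨⟨a', b'⟩, hp'⟩ h' heq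
      simp only [Finset.coe_filter, Finset.mem_univ, true_and, Set.mem_ofPred_eq] at h h' hp hp' heq
      simp only [Subtype.mk.injEq, Prod.mk.injEq]
      split_ifs at heq <;> grind
  calc _ ≤ ∑ p : PairIdx n, d * ((if p.1.1 = j then 1 else 0) + (if p.1.2 = j then 1 else 0)) :=
        Finset.sum_le_sum fun p _ => Nat.mul_le_mul_right _ (hf p)
    _ = d * ∑ p : PairIdx n, ((if p.1.1 = j then 1 else 0) + (if p.1.2 = j then 1 else 0)) := by
        rw [Finset.mul_sum]
    _ ≤ d * n := Nat.mul_le_mul_left _ h1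
    _ = n * d := mul_comm _ _

section
variable {n : ℕ} {R : Type*} [CommRing R] [Algebra ℝ R] {u : Fin n → R} {w : R}
  {ρ : PairIdx n → R}

lemma box_reduce {e : ℕ} (he : 0 < e) (ε : ℝ) (z : Fin n → R) (hz : ∀ i, z i = u i ∨ z i = 0)
    (hρ : ∀ p : PairIdx n, ρ p ^ e = 1 + ε • (z p.1.1 * z p.1.2)) {a b c : ℕ} :
    boxSpan (gens u w ρ) (gbox n a b c) ≤
      boxSpan (gens u w ρ) (gbox n (a + n * (c / e)) b (e - 1)) := by
  classical
  unfold boxSpan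
  rw [Submodule.span_le]
  rintro _ ⟨f, hf, rfl⟩
  change _ ∈ boxSpan _ _
  let E : Fin n → GenIdx n → ℕ := fun i => Pi.single (Sum.inl i) 1
  have hzE : ∀ i, z i ∈ boxSpan (gens u w ρ) (E i) := by
    intro i
    rcases hz i with h | h
    · rw [h]
      exact boxSpan_gen (g := gens u w ρ) (Sum.inl i) (by simp [E])
    · rw [h]; exact Submodule.zero_mem _
  let f1 : GenIdx n → ℕ := Sum.elim (fun i => f (Sum.inl i)) (Sum.elim (fun _ => f (Sum.inr (Sum.inl ())))
    (fun p => f (Sum.inr (Sum.inr p)) % e))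
  let d : PairIdx n → ℕ := fun p => f (Sum.inr (Sum.inr p)) / e
  have heq : ∏ i, gens u w ρ i ^ f i = (∏ i, gens u w ρ i ^ f1 i) *
      ∏ p : PairIdx n, (1 + ε • (z p.1.1 * z p.1.2)) ^ d p := by
    simp only [Fintype.prod_sum_type, gens, f1, Sum.elim_inl, Sum.elim_inr, mul_assoc]
    congr 2
    rw [← Finset.prod_mul_distrib]
    refine Finset.prod_congr rfl fun p _ => ?_
    rw [← hρ, ← pow_mul, ← pow_add, Nat.mod_add_div]
  change ∏ i, gens u w ρ i ^ f i ∈ _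
  rw [heq]
  have hd : ∀ p, d p ≤ c / e := fun p =>
    Nat.div_le_div_right (by simpa [gbox] using hf (Sum.inr (Sum.inr p)))
  have h1 : ∏ i, gens u w ρ i ^ f1 i ∈ boxSpan (gens u w ρ) (gbox n a b (e - 1)) := by
    apply boxSpan_monomial
    rintro (i | i | p)
    · simpa [f1, gbox] using hf (Sum.inl i)
    · simpa [f1, gbox] using hf (Sum.inr (Sum.inl i))
    · simp only [f1, gbox, Sum.elim_inr]
      exact Nat.le_sub_one_of_lt (Nat.mod_lt _ he)
  have h2 : ∏ p : PairIdx n, (1 + ε • (z p.1.1 * z p.1.2)) ^ d p ∈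
      boxSpan (gens u w ρ) (∑ p, d p • (E p.1.1 + E p.1.2)) := by
    apply boxSpan_prod
    intro p _
    apply boxSpan_pow
    exact Submodule.add_mem _ (boxSpan_one _) (Submodule.smul_mem _ _ (boxSpan_mul (hzE _) (hzE _)))
  refine boxSpan_mono ?_ (boxSpan_mul h1 h2)
  rintro (j | j | p)
  · have := pair_count j (c / e) d hd
    simp only [Pi.add_apply, gbox, Sum.elim_inl, Finset.sum_apply, Pi.smul_apply, smul_eq_mul, E,
      Pi.single_apply, Sum.inl.injEq]
    simp only [eq_comm (a := j)]
    omega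
  · simp [gbox, E, Finset.sum_apply]
  · simp [gbox, E, Finset.sum_apply]

lemma count_ok {e q : ℕ} (he : 0 < e) (ε : ℝ) (z : Fin n → R) (hz : ∀ i, z i = u i ∨ z i = 0)
    (hρ : ∀ p : PairIdx n, ρ p ^ e = 1 + ε • (z p.1.1 * z p.1.2))
    (hq : Fintype.card (PairIdx n) = q) (hqn : n ≤ q) (m : Fin n → R) (F : R)
    (hm : ∀ i, m i ∈ boxSpan (gens u w ρ) (gbox n 1 1 4))
    (hF : F ∈ boxSpan (gens u w ρ) (gbox n 0 0 4)) (c0 : GenIdx n → ℕ) :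
    ∃ (k : ℕ) (B : GenIdx n → ℕ),
      (∀ f ∈ boxSpan (gens u w ρ) c0, ∀ (α : Fin n → Fin k) (γ : Fin k),
        F ^ (γ : ℕ) * ((∏ j, m j ^ (α j : ℕ)) * f) ∈ boxSpan (gens u w ρ) B) ∧
      Module.finrank ℝ (boxSpan (gens u w ρ) B) <
        (n * (n * e + 4 * n * (n + 1)) ^ n * e ^ (q - n) + 1) * k ^ (n + 1) := by
  classical
  set D := n * e + 4 * n * (n + 1) with hD
  let C := ∑ i, c0 i
  have hC : c0 ≤ gbox n C C C := by
    intro i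
    have : c0 i ≤ C := Finset.single_le_sum (f := c0) (fun _ _ => Nat.zero_le _) (Finset.mem_univ i)
    rcases i with (i | i | i) <;> simpa [gbox] using this
  obtain ⟨t, ht0, ht⟩ := growth D (n * e) (C + n * C + 1) (e ^ q) n
  have hk : ∀ f ∈ boxSpan (gens u w ρ) c0, ∀ (α : Fin n → Fin (e * t)) (γ : Fin (e * t)),
      F ^ (γ : ℕ) * ((∏ j, m j ^ (α j : ℕ)) * f) ∈ boxSpan (gens u w ρ)
        (gbox n (n * (e * t) + C) (n * (e * t) + C) (4 * (n + 1) * (e * t) + C)) := by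
    intro f hf α γ
    have h1 := boxSpan_pow hF (γ : ℕ)
    have h2 : ∏ j, m j ^ (α j : ℕ) ∈ boxSpan (gens u w ρ)
        (∑ j, (α j : ℕ) • gbox n 1 1 4) := boxSpan_prod _ fun j _ => boxSpan_pow (hm j) _
    have h3 := boxSpan_mul h1 (boxSpan_mul h2 (boxSpan_mono hC hf))
    refine boxSpan_mono ?_ h3
    rw [← Finset.sum_smul, gbox_smul, gbox_smul, gbox_add, gbox_add]
    have hs : ∑ j, (α j : ℕ) ≤ n * (e * t) := by
      calc _ ≤ ∑ j : Fin n, e * t := Finset.sum_le_sum fun j _ => (α j).2.le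
        _ = _ := by simp
    have hγ := γ.2.le
    refine gbox_mono ?_ ?_ ?_ <;> nlinarith
  refine ⟨e * t, gbox n (n * (e * t) + C + n * ((4 * (n + 1) * (e * t) + C) / e))
    (n * (e * t) + C) (e - 1), fun f hf α γ => box_reduce he ε z hz hρ (hk f hf α γ), ?_⟩
  refine (boxSpan_finrank _).trans_lt ?_
  have hdiv : (4 * (n + 1) * (e * t) + C) / e ≤ 4 * (n + 1) * t + C := by
    rw [show 4 * (n + 1) * (e * t) + C = C + e * (4 * (n + 1) * t) by ring,
      Nat.add_mul_div_left _ _ he]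
    have := Nat.div_le_self C e
    omega
  simp only [Fintype.prod_sum_type, gbox, Sum.elim_inl, Sum.elim_inr, Finset.prod_const,
    Finset.card_univ, Fintype.card_fin, hq, Fintype.card_unit, pow_one, Nat.sub_add_cancel he]
  have h1 : n * (e * t) + C + n * ((4 * (n + 1) * (e * t) + C) / e) + 1 ≤ D * t + (C + n * C + 1) := by
    have := Nat.mul_le_mul_left n hdiv
    rw [hD]
    nlinarith
  have h2 : n * (e * t) + C + 1 ≤ n * e * t + (C + n * C + 1) := by
    have : n * (e * t) = n * e * t := by ring
    rw [this]
    have := Nat.zero_le (n * C)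
    omega
  have hee : e ^ (n + 1) * e ^ (q - n) = e * e ^ q := by
    rw [← pow_add, ← pow_succ']
    congr 1
    omega
  calc _ ≤ (D * t + (C + n * C + 1)) ^ n * ((n * e * t + (C + n * C + 1)) * e ^ q) := by
        gcongr
    _ = (D * t + (C + n * C + 1)) ^ n * (n * e * t + (C + n * C + 1)) * e ^ q := by ring
    _ < (D ^ n * (n * e) * e ^ q + 1) * t ^ (n + 1) := ht
    _ ≤ (n * D ^ n * e ^ (q - n) + 1) * (e * t) ^ (n + 1) := by
        rw [mul_pow, ← mul_assoc (_ + 1)]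
        apply Nat.mul_le_mul_right
        rw [add_mul]
        apply Nat.add_le_add
        · apply le_of_eq
          calc _ = n * D ^ n * (e * e ^ q) := by ring
            _ = _ := by rw [← hee]; ring
        · rw [one_mul]; exact Nat.one_le_pow _ _ he
end


/-- Cayley-Menger matrix. -/
def cmMat {n : ℕ} {R : Type*} [CommRing R] (X : Fin n → Fin n → R) :
    Matrix (Option (Fin n)) (Option (Fin n)) R := fun a b =>
  match a, b with
  | none, none => 0
  | none, some _ => 1
  | some _, none => 1
  | some i, some j => if i = j then 0 else X i j

/-- Exponent bound of an entry of the Cayley-Menger matrix. -/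
def cmExp {n : ℕ} (a b : Option (Fin n)) (p : PairIdx n) : ℕ :=
  if (a = some p.1.1 ∧ b = some p.1.2) ∨ (a = some p.1.2 ∧ b = some p.1.1) then 1 else 0

section
variable {n : ℕ} {R : Type*} [CommRing R] [Algebra ℝ R]

lemma cmMat_mem {X : Fin n → Fin n → R} {Y : PairIdx n → R}
    (h1 : ∀ p : PairIdx n, X p.1.1 p.1.2 = Y p) (h2 : ∀ p : PairIdx n, X p.1.2 p.1.1 = Y p)
    (a b : Option (Fin n)) : cmMat X a b ∈ boxSpan Y (cmExp a b) := by
  rcases a with _ | i <;> rcases b with _ | j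
  · exact Submodule.zero_mem _
  · exact boxSpan_one _
  · exact boxSpan_one _
  · simp only [cmMat]
    split_ifs with h
    · exact Submodule.zero_mem _
    · rcases lt_or_gt_of_ne h with h | h
      · rw [h1 ⟨(i, j), h⟩]
        exact boxSpan_gen _ (by simp [cmExp])
      · rw [h2 ⟨(j, i), h⟩]
        exact boxSpan_gen _ (by simp [cmExp])

lemma det_mem {Y : PairIdx n → R} (A : Matrix (Option (Fin n)) (Option (Fin n)) R)
    (hA : ∀ a b, A a b ∈ boxSpan Y (cmExp a b)) : A.det ∈ boxSpan Y (fun _ => 2) := by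
  classical
  rw [Matrix.det_apply]
  refine Submodule.sum_mem _ fun σ _ => ?_
  have h1 := boxSpan_prod (g := Y) Finset.univ (x := fun b => A (σ b) b)
    (A := fun b => cmExp (σ b) b) (fun b _ => hA _ _)
  have h2 : ∏ b, A (σ b) b ∈ boxSpan Y (fun _ => 2) := by
    refine boxSpan_mono ?_ h1
    intro p
    rw [Finset.sum_apply]
    calc ∑ b, cmExp (σ b) b p ≤ ∑ b ∈ ({some p.1.1, some p.1.2} : Finset (Option (Fin n))),
          cmExp (σ b) b p := by
          apply Finset.sum_le_sum_of_ne_zero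
          intro b _ hb
          simp only [cmExp] at hb
          simp only [Finset.mem_insert, Finset.mem_singleton]
          by_contra hcon
          apply hb
          rw [if_neg]
          tauto
      _ ≤ ∑ b ∈ ({some p.1.1, some p.1.2} : Finset (Option (Fin n))), 1 := by
          apply Finset.sum_le_sum
          intro b _
          simp only [cmExp]
          split_ifs <;> simp
      _ ≤ 2 := by
          simp only [Finset.sum_const, smul_eq_mul, mul_one]
          exact Finset.card_le_two
  rcases Int.units_eq_one_or (Equiv.Perm.sign σ) with h | h
  · rw [h, one_smul]; exact h2
  · rw [h, Units.neg_smul, one_smul]; exact Submodule.neg_mem _ h2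

lemma adj_mem {X : Fin n → Fin n → R} {Y : PairIdx n → R}
    (h1 : ∀ p : PairIdx n, X p.1.1 p.1.2 = Y p) (h2 : ∀ p : PairIdx n, X p.1.2 p.1.1 = Y p)
    (a b : Option (Fin n)) : (cmMat X).adjugate a b ∈ boxSpan Y (fun _ => 2) := by
  classical
  rw [Matrix.adjugate_apply]
  apply det_mem
  intro c d
  rw [Matrix.updateRow_apply]
  split_ifs with h
  · rw [Pi.single_apply]
    split_ifs
    · exact boxSpan_one _
    · exact Submodule.zero_mem _
  · exact cmMat_mem h1 h2 _ _

/-- Clearing factor. -/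
def clearF (c2 : ℤ) (ρ : PairIdx n → R) : R := if c2 < 0 then ∏ p, ρ p ^ 4 else 1

lemma clear_mem {c2 : ℤ} {u : Fin n → R} {w : R} {ρ Y : PairIdx n → R}
    (hpos : 0 ≤ c2 → ∀ p, Y p = ρ p ^ 2) (hneg : c2 < 0 → ∀ p, ρ p ^ 2 * Y p = 1) {x : R}
    (hx : x ∈ boxSpan Y (fun _ => 2)) :
    clearF c2 ρ * x ∈ boxSpan (gens u w ρ) (gbox n 0 0 4) := by
  classical
  have key : ∀ σ : PairIdx n → ℕ, (∀ p, σ p ≤ 4) →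
      ∏ p, ρ p ^ σ p ∈ boxSpan (gens u w ρ) (gbox n 0 0 4) := by
    intro σ hσ
    have := boxSpan_monomial (g := gens u w ρ) (A := gbox n 0 0 4)
      (f := Sum.elim (fun _ => 0) (Sum.elim (fun _ => 0) σ))
      (by rintro (i | i | p) <;> simp [gbox, hσ])
    simpa [Fintype.prod_sum_type, gens] using this
  induction hx using Submodule.span_induction with
  | mem x hx =>
    obtain ⟨f, hf, rfl⟩ := hx
    have hf' : ∀ p, f p ≤ 2 := fun p => hf p
    by_cases h : c2 < 0
    · have : clearF c2 ρ * ∏ p, Y p ^ f p = ∏ p, ρ p ^ (4 - 2 * f p) := by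
        rw [clearF, if_pos h, ← Finset.prod_mul_distrib]
        refine Finset.prod_congr rfl fun p _ => ?_
        have e1 : ρ p ^ 4 = ρ p ^ (4 - 2 * f p) * (ρ p ^ 2) ^ f p := by
          rw [← pow_mul, ← pow_add]
          congr 1
          have := hf' p
          omega
        rw [e1, mul_assoc, ← mul_pow, hneg h, one_pow, mul_one]
      change clearF c2 ρ * ∏ p, Y p ^ f p ∈ _
      rw [this]
      exact key _ fun p => Nat.sub_le _ _
    · have : clearF c2 ρ * ∏ p, Y p ^ f p = ∏ p, ρ p ^ (2 * f p) := by
        rw [clearF, if_neg h, one_mul]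
        refine Finset.prod_congr rfl fun p _ => ?_
        rw [hpos (not_lt.1 h), pow_mul]
      change clearF c2 ρ * ∏ p, Y p ^ f p ∈ _
      rw [this]
      exact key _ fun p => by have := hf' p; omega
  | zero => simp
  | add x y _ _ h1 h2 => rw [mul_add]; exact Submodule.add_mem _ h1 h2
  | smul r x _ h1 => rw [mul_smul_comm]; exact Submodule.smul_mem _ _ h1

/-- Masses. -/
def massF (S : Finset (Fin n)) (u : Fin n → R) (w : R) (Δ : Fin n → R) (i : Fin n) : R :=
  if i ∈ S then w * (Δ i * ∏ j ∈ S.erase i, u j) else u i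

lemma massF_mem {S : Finset (Fin n)} {u : Fin n → R} {w : R} {ρ : PairIdx n → R} {Δ : Fin n → R}
    (hΔ : ∀ i, Δ i ∈ boxSpan (gens u w ρ) (gbox n 0 0 4)) (i : Fin n) :
    massF S u w Δ i ∈ boxSpan (gens u w ρ) (gbox n 1 1 4) := by
  classical
  unfold massF
  split_ifs with h
  · have h1 : w ∈ boxSpan (gens u w ρ) (gbox n 0 1 0) :=
      boxSpan_gen (g := gens u w ρ) (Sum.inr (Sum.inl ())) (by simp [gbox])
    have h2 : ∏ j ∈ S.erase i, u j ∈ boxSpan (gens u w ρ) (gbox n 1 0 0) := by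
      have := boxSpan_monomial (g := gens u w ρ) (A := gbox n 1 0 0)
        (f := Sum.elim (fun j => if j ∈ S.erase i then 1 else 0) (Sum.elim (fun _ => 0) (fun _ => 0)))
        (by
          rintro (j | j | p)
          · simp only [gbox, Sum.elim_inl]; split_ifs <;> simp
          · simp [gbox]
          · simp [gbox])
      have e : ∏ j ∈ S.erase i, u j = ∏ j, u j ^ (if j ∈ S.erase i then 1 else 0) := by
        rw [← Finset.prod_subset (Finset.subset_univ (S.erase i))]
        · exact Finset.prod_congr rfl fun j hj => by rw [if_pos hj, pow_one]
        · intro j _ hj; rw [if_neg hj, pow_zero]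
      rw [e]
      simpa [Fintype.prod_sum_type, gens] using this
    have := boxSpan_mul h1 (boxSpan_mul (hΔ i) h2)
    rw [gbox_add, gbox_add] at this
    exact this
  · exact boxSpan_gen (g := gens u w ρ) (Sum.inl i) (by simp [gbox])
end


lemma cmMat_mulVec_none {n : ℕ} (X : Fin n → Fin n → ℝ) (v : Option (Fin n) → ℝ) :
    (cmMat X).mulVec v none = ∑ j, v (some j) := by
  simp [Matrix.mulVec, dotProduct, Fintype.sum_option, cmMat]

lemma cmMat_mulVec_some {n : ℕ} (X : Fin n → Fin n → ℝ) (v : Option (Fin n) → ℝ) (i : Fin n) :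
    (cmMat X).mulVec v (some i) = v none + ∑ j, (if i = j then 0 else X i j) * v (some j) := by
  simp [Matrix.mulVec, dotProduct, Fintype.sum_option, cmMat]

lemma cmMat_one_ker {n : ℕ} (hn : 0 < n) (v : Option (Fin n) → ℝ)
    (hv : (cmMat (fun _ _ : Fin n => (1 : ℝ))).mulVec v = 0) : v = 0 := by
  have h0 := congrFun hv none
  rw [cmMat_mulVec_none] at h0
  have h1 : ∀ i, v (some i) = v none := by
    intro i
    have := congrFun hv (some i)
    rw [cmMat_mulVec_some] at this
    have e : ∑ j, (if i = j then (0 : ℝ) else 1) * v (some j) = ∑ j, v (some j) - v (some i) := by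
      rw [eq_sub_iff_add_eq, ← Finset.sum_erase_add _ _ (Finset.mem_univ i),
        ← Finset.sum_erase_add (Finset.univ) (fun j => v (some j)) (Finset.mem_univ i)]
      simp only [if_pos, zero_mul, add_zero]
      congr 1
      refine Finset.sum_congr rfl fun j hj => ?_
      rw [if_neg (Finset.ne_of_mem_erase hj).symm, one_mul]
    rw [e] at this
    simp only [Pi.zero_apply] at this h0
    linarith
  simp only [h1, Finset.sum_const, Finset.card_univ, Fintype.card_fin, Pi.zero_apply,
    nsmul_eq_mul, mul_eq_zero] at h0
  have h2 : v none = 0 := by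
    rcases h0 with h | h
    · have : n = 0 := by exact_mod_cast h
      omega
    · exact h
  funext a
  rcases a with _ | i
  · exact h2
  · rw [h1, h2]; rfl

lemma cmMat_one_det {n : ℕ} (hn : 0 < n) : (cmMat (fun _ _ : Fin n => (1 : ℝ))).det ≠ 0 := by
  intro h
  obtain ⟨v, hv0, hv⟩ := Matrix.exists_mulVec_eq_zero_iff.2 h
  exact hv0 (cmMat_one_ker hn v hv)

/-- The coordinates `z` supported on `S`. -/
def zOf {n : ℕ} (S : Finset (Fin n)) (u : Fin n → ℝ) (i : Fin n) : ℝ := if i ∈ S then u i else 0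

/-- The quantity `r_{ij}^{2a}`. -/
def baseR {n : ℕ} (ε : ℝ) (z : Fin n → ℝ) (i j : Fin n) : ℝ := 1 + ε * (z i * z j)

/-- The squared distances. -/
noncomputable def sqR {n : ℕ} (c2 : ℤ) (ε : ℝ) (z : Fin n → ℝ) (i j : Fin n) : ℝ :=
  baseR ε z i j ^ ((2 : ℝ) / c2)

/-- The distances or their inverses. -/
noncomputable def rhoR {n : ℕ} (c2 : ℤ) (ε : ℝ) (z : Fin n → ℝ) (p : PairIdx n) : ℝ :=
  baseR ε z p.1.1 p.1.2 ^ ((1 : ℝ) / (c2.natAbs : ℝ))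

/-- The parameter domain. -/
def domR {n : ℕ} (ε : ℝ) (S : Finset (Fin n)) : Set ((Fin n → ℝ) × ℝ) :=
  {p | ∀ i j, i ≠ j → 0 < baseR ε (zOf S p.1) i j}

lemma zOf_smul {n : ℕ} (S : Finset (Fin n)) (t : ℝ) (u : Fin n → ℝ) (i : Fin n) :
    zOf S (t • u) i = t * zOf S u i := by
  simp [zOf]

lemma cmMat_analytic {n : ℕ} (c2 : ℤ) (ε : ℝ) (z : Fin n → ℝ) (t : ℝ)
    (ht : ∀ i j, i ≠ j → 0 < 1 + ε * (t * z i * (t * z j))) :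
    AnalyticAt ℝ (fun t : ℝ => (cmMat (sqR c2 ε (t • z))).det) t := by
  simp only [Matrix.det_apply]
  apply Finset.analyticAt_fun_sum
  intro σ _
  have : AnalyticAt ℝ (fun t : ℝ => ∏ b, cmMat (sqR c2 ε (t • z)) (σ b) b) t := by
    apply Finset.analyticAt_fun_prod
    intro b _
    generalize σ b = a
    rcases a with _ | i <;> rcases b with _ | j
    · exact analyticAt_const
    · exact analyticAt_const
    · exact analyticAt_const
    · simp only [cmMat]
      split_ifs with h
      · exact analyticAt_const
      · have hb : AnalyticAt ℝ (fun t : ℝ => 1 + ε * (t * z i * (t * z j))) t := by fun_prop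
        have hpos := ht i j h
        have h1 : AnalyticAt ℝ (fun t : ℝ => Real.exp (Real.log (1 + ε * (t * z i * (t * z j))) *
            ((2 : ℝ) / c2))) t := ((hb.log hpos).mul analyticAt_const).rexp'
        refine h1.congr ?_
        filter_upwards [hb.continuousAt.eventually (lt_mem_nhds hpos)] with s hs
        simp only [sqR, baseR, Pi.smul_apply, smul_eq_mul]
        rw [Real.rpow_def_of_pos hs]
  rcases Int.units_eq_one_or (Equiv.Perm.sign σ) with h | h
  · simpa [h] using this
  · have h3 := this.neg
    simp only [h, Units.neg_smul, one_smul]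
    exact h3

section
variable {n : ℕ} (c2 : ℤ) (ε : ℝ) (S : Finset (Fin n))

/-- The coordinate functions. -/
def uC (i : Fin n) : C(domR ε S, ℝ) := ⟨fun p => p.1.1 i, by fun_prop⟩

/-- The scaling coordinate. -/
def wC : C(domR ε S, ℝ) := ⟨fun p => p.1.2, by fun_prop⟩

/-- The functions `z`. -/
def zC (i : Fin n) : C(domR ε S, ℝ) := if i ∈ S then uC ε S i else 0

lemma zC_apply (i : Fin n) (p : domR ε S) : zC ε S i p = zOf S p.1.1 i := by
  unfold zC zOf
  split_ifs <;> rfl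

lemma base_cont (i j : Fin n) : Continuous fun p : domR ε S => baseR ε (zOf S p.1.1) i j := by
  have : (fun p : domR ε S => baseR ε (zOf S p.1.1) i j)
      = fun p => 1 + ε * (zC ε S i p * zC ε S j p) := by
    funext p; simp [baseR, zC_apply]
  rw [this]
  fun_prop

/-- Squared distances as functions. -/
noncomputable def sqC (i j : Fin n) : C(domR ε S, ℝ) :=
  if h : i = j then 0 else
  ⟨fun p => sqR c2 ε (zOf S p.1.1) i j, by
    unfold sqR
    exact (base_cont ε S i j).rpow_const fun p => Or.inl (p.2 i j h).ne'⟩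

/-- `rhoR` as functions. -/
noncomputable def rhoC (q : PairIdx n) : C(domR ε S, ℝ) :=
  ⟨fun p => rhoR c2 ε (zOf S p.1.1) q, by
    unfold rhoR
    exact (base_cont ε S _ _).rpow_const fun p => Or.inl (p.2 _ _ q.2.ne).ne'⟩

lemma map_cmMat (p : domR ε S) :
    (ContinuousMap.evalAlgHom ℝ ℝ p).mapMatrix (cmMat (sqC c2 ε S)) =
      cmMat (sqR c2 ε (zOf S p.1.1)) := by
  ext a b
  rcases a with _ | i <;> rcases b with _ | j
  · simp [cmMat]
  · simp [cmMat]
  · simp [cmMat]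
  · simp only [AlgHom.mapMatrix_apply, Matrix.map_apply, cmMat]
    split_ifs with h
    · simp
    · simp [sqC, h]

/-- The defining function of the hypersurface. -/
noncomputable def FC : C(domR ε S, ℝ) :=
  clearF c2 (rhoC c2 ε S) * (cmMat (sqC c2 ε S)).det

/-- The numerators of the masses. -/
noncomputable def DC (l i : Fin n) : C(domR ε S, ℝ) :=
  clearF c2 (rhoC c2 ε S) * (cmMat (sqC c2 ε S)).adjugate (some i) (some l)

lemma rhoR_pos (p : domR ε S) (q : PairIdx n) : 0 < rhoR c2 ε (zOf S p.1.1) q :=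
  Real.rpow_pos_of_pos (p.2 _ _ q.2.ne) _

lemma clear_eval (p : domR ε S) : ContinuousMap.evalAlgHom ℝ ℝ p (clearF c2 (rhoC c2 ε S)) =
    clearF c2 (rhoR c2 ε (zOf S p.1.1)) := by
  unfold clearF
  split_ifs
  · simp [map_prod, rhoC]
  · simp

lemma clear_pos (p : domR ε S) : 0 < clearF c2 (rhoR c2 ε (zOf S p.1.1)) := by
  unfold clearF
  split_ifs
  · exact Finset.prod_pos fun q _ => pow_pos (rhoR_pos c2 ε S p q) _
  · exact one_pos

lemma FC_eval (p : domR ε S) : ContinuousMap.evalAlgHom ℝ ℝ p (FC c2 ε S) =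
    clearF c2 (rhoR c2 ε (zOf S p.1.1)) * (cmMat (sqR c2 ε (zOf S p.1.1))).det := by
  rw [FC, map_mul, clear_eval, AlgHom.map_det, map_cmMat]

lemma DC_eval (l i : Fin n) (p : domR ε S) : ContinuousMap.evalAlgHom ℝ ℝ p (DC c2 ε S l i) =
    clearF c2 (rhoR c2 ε (zOf S p.1.1)) *
      (cmMat (sqR c2 ε (zOf S p.1.1))).adjugate (some i) (some l) := by
  rw [DC, map_mul, clear_eval, ← map_cmMat, ← AlgHom.map_adjugate]
  rfl

lemma FC_nzd (hn : 0 < n) : FC c2 ε S ∈ nonZeroDivisors C(domR ε S, ℝ) := by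
  rw [mem_nonZeroDivisors_iff_right]
  intro G hG
  ext p
  by_contra hGp
  simp only [ContinuousMap.zero_apply] at hGp
  set z := zOf S p.1.1 with hz
  let W : Set ℝ := {t | ∀ i j, i ≠ j → 0 < 1 + ε * (t * z i * (t * z j))}
  have hWopen : IsOpen W := by
    have : W = ⋂ i, ⋂ j, {t | i ≠ j → 0 < 1 + ε * (t * z i * (t * z j))} := by
      ext t; simp [W]
    rw [this]
    refine isOpen_iInter_of_finite fun i => isOpen_iInter_of_finite fun j => ?_
    by_cases h : i = j
    · simp [h]
    · simp only [ne_eq, h, not_false_eq_true, forall_const]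
      exact isOpen_lt continuous_const (by fun_prop)
  have hW0 : (0 : ℝ) ∈ W := by intro i j _; simp
  have hW1 : (1 : ℝ) ∈ W := by
    intro i j h
    have h3 := p.2 i j h
    simp only [baseR] at h3
    rw [one_mul, one_mul]
    exact h3
  have hWpre : IsPreconnected W := by
    have : StarConvex ℝ 0 W := by
      intro t ht a b ha hb hab i j hij
      have h1 := ht i j hij
      have hb1 : b ≤ 1 := by linarith
      simp only [smul_eq_mul, mul_zero, zero_add]
      have hb2 : 0 ≤ b * b := mul_nonneg hb hb
      have hb3 : b * b ≤ 1 := by nlinarith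
      have e : 1 + ε * (b * t * z i * (b * t * z j)) =
          (1 - b * b) + (b * b) * (1 + ε * (t * z i * (t * z j))) := by ring
      rw [e]
      by_cases hb0 : b * b = 0
      · rw [hb0]; norm_num
      · have : 0 < b * b := lt_of_le_of_ne hb2 (Ne.symm hb0)
        have := mul_pos this h1
        linarith
    exact (this.isPathConnected hW0).isConnected.isPreconnected
  have han : AnalyticOnNhd ℝ (fun t : ℝ => (cmMat (sqR c2 ε (t • z))).det) W :=
    fun t ht => cmMat_analytic c2 ε z t ht
  let path : W → domR ε S := fun t => ⟨(t.1 • p.1.1, p.1.2), by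
    intro i j hij
    have := t.2 i j hij
    simpa [baseR, zOf_smul] using this⟩
  have hpath : Continuous path := by
    apply Continuous.subtype_mk
    fun_prop
  have hp1 : path ⟨1, hW1⟩ = p := by
    apply Subtype.ext
    simp [path]
  have hev : ∀ᶠ t in nhds (1 : ℝ), (fun t : ℝ => (cmMat (sqR c2 ε (t • z))).det) t = (0 : ℝ → ℝ) t := by
    have h1 : ∀ᶠ t in nhds (⟨1, hW1⟩ : W), G (path t) ≠ 0 := by
      have hc : Continuous fun t => G (path t) := by fun_prop
      apply hc.continuousAt.eventually_ne
      rw [hp1]; exact hGp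
    have h2 : ∀ᶠ t in nhds (⟨1, hW1⟩ : W), (cmMat (sqR c2 ε (t.1 • z))).det = 0 := by
      filter_upwards [h1] with t ht
      have := DFunLike.congr_fun hG (path t)
      rw [ContinuousMap.mul_apply, ContinuousMap.zero_apply] at this
      have h3 := (mul_eq_zero.1 this).resolve_left ht
      have h4 := FC_eval c2 ε S (path t)
      rw [show ContinuousMap.evalAlgHom ℝ ℝ (path t) (FC c2 ε S) = FC c2 ε S (path t) from rfl,
        h3] at h4
      have h5 := (mul_eq_zero.1 h4.symm).resolve_left (clear_pos c2 ε S (path t)).ne'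
      have h6 : zOf S (path t).1.1 = t.1 • z := by
        funext i
        simp [path, zOf_smul, hz]
      rwa [h6] at h5
    rw [nhds_subtype_eq_comap, Filter.eventually_comap] at h2
    filter_upwards [h2, hWopen.mem_nhds hW1] with t ht htW
    exact ht ⟨t, htW⟩ rfl
  have h0 := han.eqOn_zero_of_preconnected_of_eventuallyEq_zero hWpre hW1 hev hW0
  simp only [zero_smul, Pi.zero_apply] at h0
  have h7 : sqR c2 ε (0 : Fin n → ℝ) = fun _ _ => 1 := by
    funext i j
    simp [sqR, baseR]
  rw [h7] at h0
  exact cmMat_one_det hn h0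

lemma fibre_concrete (hc2 : c2 ≠ 0) (hn : 0 < n) (l : Fin n) {q : ℕ}
    (hq : Fintype.card (PairIdx n) = q) (hqn : n ≤ q) :
    ∃ h : MvPolynomial (Fin n) ℝ, h ≠ 0 ∧ ∀ m0 : Fin n → ℝ, MvPolynomial.eval m0 h ≠ 0 →
      ∀ x : Fin (n * (n * c2.natAbs + 4 * n * (n + 1)) ^ n * c2.natAbs ^ (q - n) + 1) → domR ε S,
        Function.Injective x → (∀ j, (cmMat (sqR c2 ε (zOf S (x j).1.1))).det = 0) →
        (∀ j i, massF S (x j).1.1 (x j).1.2 (fun i => clearF c2 (rhoR c2 ε (zOf S (x j).1.1)) *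
          (cmMat (sqR c2 ε (zOf S (x j).1.1))).adjugate (some i) (some l)) i = m0 i) → False := by
  have he : 0 < c2.natAbs := Int.natAbs_pos.2 hc2
  have heR : (c2.natAbs : ℝ) ≠ 0 := by positivity
  let Y : PairIdx n → C(domR ε S, ℝ) := fun p => sqC c2 ε S p.1.1 p.1.2
  have hY2 : ∀ p : PairIdx n, sqC c2 ε S p.1.2 p.1.1 = Y p := by
    intro p
    ext x
    have h := p.2.ne
    simp [Y, sqC, h, h.symm, sqR, baseR, mul_comm (zOf S x.1.1 p.1.1)]
  have hrho2 : ∀ (x : domR ε S) (p : PairIdx n), rhoR c2 ε (zOf S x.1.1) p ^ 2 =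
      baseR ε (zOf S x.1.1) p.1.1 p.1.2 ^ ((2 : ℝ) / (c2.natAbs : ℝ)) := by
    intro x p
    have hb := x.2 _ _ p.2.ne
    rw [rhoR, ← Real.rpow_natCast, ← Real.rpow_mul hb.le]
    congr 1
    push_cast
    ring
  have hpos : 0 ≤ c2 → ∀ p, Y p = rhoC c2 ε S p ^ 2 := by
    intro hc p
    ext x
    have h := p.2.ne
    have e : ((c2.natAbs : ℤ) : ℝ) = c2 := by rw [Int.natAbs_of_nonneg hc]
    simp only [Y, sqC, h, dif_neg, not_false_eq_true, ContinuousMap.coe_mk, ContinuousMap.pow_apply,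
      rhoC, hrho2]
    rw [sqR, ← e]; simp
  have hneg : c2 < 0 → ∀ p, rhoC c2 ε S p ^ 2 * Y p = 1 := by
    intro hc p
    ext x
    have h := p.2.ne
    have e : ((c2.natAbs : ℤ) : ℝ) = -c2 := by
      rw [Int.ofNat_natAbs_of_nonpos hc.le]; simp
    have e' : (c2.natAbs : ℝ) = -c2 := by rw [← e]; simp
    simp only [Y, sqC, h, dif_neg, not_false_eq_true, ContinuousMap.coe_mk, ContinuousMap.pow_apply,
      rhoC, hrho2, ContinuousMap.mul_apply, ContinuousMap.one_apply]
    rw [sqR, ← Real.rpow_add (x.2 _ _ h), e', div_neg, neg_add_cancel, Real.rpow_zero]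
  have hrel : ∀ p : PairIdx n, rhoC c2 ε S p ^ c2.natAbs =
      1 + ε • (zC ε S p.1.1 * zC ε S p.1.2) := by
    intro p
    ext x
    have hb := x.2 _ _ p.2.ne
    simp only [ContinuousMap.pow_apply, rhoC, ContinuousMap.coe_mk, ContinuousMap.add_apply,
      ContinuousMap.one_apply, ContinuousMap.smul_apply, ContinuousMap.mul_apply, zC_apply,
      smul_eq_mul]
    rw [rhoR, ← Real.rpow_natCast, ← Real.rpow_mul hb.le, one_div_mul_cancel heR, Real.rpow_one]
    rfl
  have hDmem : ∀ i, DC c2 ε S l i ∈ boxSpan (gens (uC ε S) (wC ε S) (rhoC c2 ε S)) (gbox n 0 0 4) :=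
    fun i => clear_mem hpos hneg (adj_mem (fun _ => rfl) hY2 _ _)
  have hFmem : FC c2 ε S ∈ boxSpan (gens (uC ε S) (wC ε S) (rhoC c2 ε S)) (gbox n 0 0 4) :=
    clear_mem hpos hneg (det_mem _ (cmMat_mem (fun _ => rfl) hY2))
  obtain ⟨h, h0, hh⟩ := fibre_bound (massF S (uC ε S) (wC ε S) (DC c2 ε S l)) (FC c2 ε S)
    (FC_nzd c2 ε S hn) (gens (uC ε S) (wC ε S) (rhoC c2 ε S))
    (count_ok he ε (zC ε S) (fun i => by unfold zC; split_ifs <;> simp) hrel hq hqn _ _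
      (massF_mem hDmem) hFmem)
  refine ⟨h, h0, fun m0 hm0 x hinj hdet hmass => hh m0 hm0
    (fun j => ContinuousMap.evalAlgHom ℝ ℝ (x j)) ?_ ?_ ?_⟩
  · intro j
    rw [FC_eval, hdet, mul_zero]
  · intro j i
    rw [← hmass j i]
    unfold massF
    split_ifs
    · rw [map_mul, map_mul, DC_eval, map_prod]
      rfl
    · rfl
  · intro j j' hjj
    by_contra hcon
    push Not at hcon
    apply hjj
    apply hinj
    apply Subtype.ext
    apply Prod.ext
    · funext i
      exact hcon (Sum.inl i)
    · exact hcon (Sum.inr (Sum.inl ()))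
end


lemma adj_col {ι : Type*} [Fintype ι] [DecidableEq ι] (A : Matrix ι ι ℝ) (hA : A.IsSymm)
    (v : ι → ℝ) (hv : A.mulVec v = 0) (hker : ∀ x, A.mulVec x = 0 → ∃ c : ℝ, x = c • v)
    (l : ι) (hl : v l ≠ 0) :
    A.det = 0 ∧ ∃ c : ℝ, c ≠ 0 ∧ ∀ i, A.adjugate i l = c * v i := by
  have hdet : A.det = 0 := Matrix.exists_mulVec_eq_zero_iff.1
    ⟨v, fun h => hl (by rw [h]; rfl), hv⟩
  refine ⟨hdet, ?_⟩
  have h1 : A.mulVec (fun i => A.adjugate i l) = 0 := by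
    have h := A.mul_adjugate
    rw [hdet, zero_smul] at h
    funext i
    exact congrFun (congrFun h i) l
  obtain ⟨c, hc⟩ := hker _ h1
  refine ⟨c, ?_, fun i => by simpa using congrFun hc i⟩
  rintro rfl
  have h2 : A.adjugate l l = 0 := by simpa using congrFun hc l
  rw [Matrix.adjugate_apply] at h2
  obtain ⟨x, hx0, hx⟩ := Matrix.exists_mulVec_eq_zero_iff.2 h2
  have hxl : x l = 0 := by
    have := congrFun hx l
    simpa [Matrix.mulVec, Matrix.updateRow_self] using this
  have hxi : ∀ i, i ≠ l → A.mulVec x i = 0 := by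
    intro i hi
    have := congrFun hx i
    simpa [Matrix.mulVec, Matrix.updateRow_ne hi] using this
  have h3 : dotProduct v (A.mulVec x) = 0 := by
    rw [Matrix.dotProduct_mulVec, ← Matrix.mulVec_transpose, hA.eq, hv, zero_dotProduct]
  have h4 : dotProduct v (A.mulVec x) = v l * A.mulVec x l := by
    rw [dotProduct, Finset.sum_eq_single l]
    · intro i _ hi; rw [hxi i hi, mul_zero]
    · simp
  have h5 : A.mulVec x = 0 := by
    funext i
    by_cases hi : i = l
    · subst hi
      rw [h4] at h3
      exact (mul_eq_zero.1 h3).resolve_left hl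
    · exact hxi i hi
  obtain ⟨d, hd⟩ := hker x h5
  have h6 : d * v l = 0 := by rw [← hxl, hd]; rfl
  have h7 : d = 0 := (mul_eq_zero.1 h6).resolve_right hl
  exact hx0 (by rw [hd, h7, zero_smul])

section
variable {n : ℕ} {x : Fin n → EuclideanSpace ℝ (Fin (n - 2))}

lemma functional_zero (hx : confDim x = n - 2) (f : EuclideanSpace ℝ (Fin (n - 2)) →ₗ[ℝ] ℝ)
    (c : ℝ) (hf : ∀ i, f (x i) = c) : f = 0 := by
  have h1 : (affineSpan ℝ (Set.range x)).direction = ⊤ := by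
    apply Submodule.eq_top_of_finrank_eq
    rw [finrank_euclideanSpace, Fintype.card_fin]
    exact hx
  rw [direction_affineSpan, vectorSpan_def] at h1
  rw [← LinearMap.ker_eq_top, eq_top_iff, ← h1, Submodule.span_le]
  rintro _ ⟨_, ⟨i, rfl⟩, _, ⟨j, rfl⟩, rfl⟩
  simp [hf]

lemma exists_delta (hn : 2 ≤ n) (hx : confDim x = n - 2) :
    ∃ Δ : Fin n → ℝ, Δ ≠ 0 ∧ ∑ i, Δ i = 0 ∧ ∑ i, Δ i • x i = 0 ∧
      ∀ v : Fin n → ℝ, ∑ i, v i = 0 → ∑ i, v i • x i = 0 → ∃ c : ℝ, v = c • Δ := by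
  let L : (Fin n → ℝ) →ₗ[ℝ] ℝ × EuclideanSpace ℝ (Fin (n - 2)) :=
    Fintype.linearCombination ℝ (fun i => ((1 : ℝ), x i))
  have hL : ∀ v, L v = (∑ i, v i, ∑ i, v i • x i) := by
    intro v
    simp only [L, Fintype.linearCombination_apply]
    ext1
    · simp [Prod.fst_sum]
    · simp [Prod.snd_sum]
  have hsurj : LinearMap.range L = ⊤ := by
    by_contra hne
    obtain ⟨f, hf0, hf⟩ := Submodule.exists_le_ker_of_lt_top _ (lt_top_iff_ne_top.2 hne)
    have h1 : ∀ i, f (1, x i) = 0 := by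
      intro i
      apply hf
      refine ⟨Pi.single i 1, ?_⟩
      simp [L, Fintype.linearCombination_apply_single]
    have h2 : ∀ i, f (0, x i) = - f (1, 0) := by
      intro i
      have := h1 i
      rw [show ((1 : ℝ), x i) = (1, 0) + (0, x i) by simp, map_add] at this
      linarith
    have h3 : f ∘ₗ LinearMap.inr ℝ ℝ _ = 0 := functional_zero hx _ (- f (1, 0)) h2
    have h4 : f (1, 0) = 0 := by
      have a := h2 ⟨0, by omega⟩
      have b := LinearMap.congr_fun h3 (x ⟨0, by omega⟩)
      simp only [LinearMap.comp_apply, LinearMap.inr_apply, LinearMap.zero_apply] at b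
      linarith
    apply hf0
    ext y
    · simpa using h4
    · simpa using LinearMap.congr_fun h3 y
  have hk : Module.finrank ℝ (LinearMap.ker L) = 1 := by
    have h1 := L.finrank_range_add_finrank_ker
    rw [hsurj, finrank_top, Module.finrank_prod, finrank_euclideanSpace, Module.finrank_fin_fun,
      Fintype.card_fin, Module.finrank_self] at h1
    omega
  obtain ⟨⟨Δ, hΔ⟩, h0, h1⟩ := finrank_eq_one_iff'.1 hk
  rw [LinearMap.mem_ker, hL, Prod.mk_eq_zero] at hΔ
  refine ⟨Δ, fun h => h0 (Subtype.ext h), hΔ.1, hΔ.2, fun v hv1 hv2 => ?_⟩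
  obtain ⟨c, hc⟩ := h1 ⟨v, by rw [LinearMap.mem_ker, hL, hv1, hv2]; rfl⟩
  exact ⟨c, (congrArg Subtype.val hc).symm⟩

/-- Matrix of squared distances. -/
noncomputable def dsq (x : Fin n → EuclideanSpace ℝ (Fin (n - 2))) (i j : Fin n) : ℝ :=
  dist (x i) (x j) ^ 2

lemma cm_dsq_row (v : Option (Fin n) → ℝ) (hv : ∑ j, v (some j) = 0) (i : Fin n) :
    (cmMat (dsq x)).mulVec v (some i) =
      v none + ∑ j, v (some j) * ‖x j‖ ^ 2 - 2 * inner ℝ (∑ j, v (some j) • x j) (x i) := by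
  rw [cmMat_mulVec_some]
  have e : ∀ j, (if i = j then 0 else dsq x i j) * v (some j) =
      ‖x i‖ ^ 2 * v (some j) - 2 * (v (some j) * inner ℝ (x j) (x i)) + v (some j) * ‖x j‖ ^ 2 := by
    intro j
    have h1 : (if i = j then 0 else dsq x i j) = dsq x i j := by
      split_ifs with h
      · subst h; simp [dsq]
      · rfl
    rw [h1, dsq, dist_eq_norm, norm_sub_sq_real, real_inner_comm]
    ring
  simp only [e, Finset.sum_add_distrib, Finset.sum_sub_distrib, ← Finset.mul_sum, hv, sum_inner,
    real_inner_smul_left]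
  ring

lemma cm_kernel (hn : 2 ≤ n) (hx : confDim x = n - 2) (Δ : Fin n → ℝ)
    (h1 : ∑ i, Δ i = 0) (h2 : ∑ i, Δ i • x i = 0)
    (h3 : ∀ v : Fin n → ℝ, ∑ i, v i = 0 → ∑ i, v i • x i = 0 → ∃ c : ℝ, v = c • Δ) :
    ∃ V : Option (Fin n) → ℝ, (∀ i, V (some i) = Δ i) ∧ (cmMat (dsq x)).mulVec V = 0 ∧
      ∀ y, (cmMat (dsq x)).mulVec y = 0 → ∃ c : ℝ, y = c • V := by
  let V : Option (Fin n) → ℝ := fun a => a.elim (- ∑ j, Δ j * ‖x j‖ ^ 2) Δ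
  have hVn : V none = - ∑ j, Δ j * ‖x j‖ ^ 2 := rfl
  have hVs : ∀ i, V (some i) = Δ i := fun _ => rfl
  refine ⟨V, hVs, ?_, ?_⟩
  · funext a
    rcases a with _ | i
    · rw [cmMat_mulVec_none]; simpa [hVs] using h1
    · rw [cm_dsq_row V (by simpa [hVs] using h1)]
      simp [hVs, hVn, h2]
  · intro y hy
    have hy0 : ∑ j, y (some j) = 0 := by
      have := congrFun hy none
      rwa [cmMat_mulVec_none] at this
    have hyi : ∀ i, y none + ∑ j, y (some j) * ‖x j‖ ^ 2
        - 2 * inner ℝ (∑ j, y (some j) • x j) (x i) = 0 := by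
      intro i
      rw [← cm_dsq_row y hy0 i, hy]; rfl
    have h4 : ∑ j, y (some j) • x j = 0 := by
      have h5 := functional_zero hx (innerₗ _ (∑ j, y (some j) • x j))
        ((y none + ∑ j, y (some j) * ‖x j‖ ^ 2) / 2) (fun i => by
          have := hyi i
          rw [innerₗ_apply_apply]
          linarith)
      have h6 := LinearMap.congr_fun h5 (∑ j, y (some j) • x j)
      rw [innerₗ_apply_apply, LinearMap.zero_apply] at h6
      exact inner_self_eq_zero.1 h6
    obtain ⟨c, hc⟩ := h3 (fun j => y (some j)) hy0 h4
    have hc' : ∀ j, y (some j) = c * Δ j := fun j => congrFun hc j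
    refine ⟨c, ?_⟩
    funext a
    rcases a with _ | i
    · have := hyi ⟨0, by omega⟩
      rw [h4, inner_zero_left] at this
      simp only [hc', mul_assoc, ← Finset.mul_sum] at this
      rw [Pi.smul_apply, smul_eq_mul, hVn]
      linarith
    · exact hc' i

lemma cc_relation {c2 : ℤ} {m : Fin n → ℝ} (hm : ∀ i, 0 < m i) (hn : 2 ≤ n)
    (hcc : IsCentralConfig c2 m (∑ i, m i) x) (Δ : Fin n → ℝ) (hΔ : Δ ≠ 0)
    (h3 : ∀ v : Fin n → ℝ, ∑ i, v i = 0 → ∑ i, v i • x i = 0 → ∃ c : ℝ, v = c • Δ) :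
    ∃ κ : ℝ, ∀ i j, i ≠ j → dist (x i) (x j) ^ c2 = 1 + κ * ((Δ i / m i) * (Δ j / m j)) := by
  have hM : 0 < ∑ i, m i := Finset.sum_pos (fun i _ => hm i) ⟨⟨0, by omega⟩, Finset.mem_univ _⟩
  have key : ∀ j, ∃ k : ℝ, ∀ i, i ≠ j → m i * (dist (x i) (x j) ^ c2 - 1) = k * Δ i := by
    intro j
    let g : Fin n → ℝ := fun i => m i * (dist (x i) (x j) ^ c2 - 1)
    let v : Fin n → ℝ := fun i => if i = j then - ∑ i ∈ Finset.univ \ {j}, g i else g i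
    have hsplit : ∀ {M : Type} [AddCommMonoid M] (F : Fin n → M),
        ∑ i, F i = ∑ i ∈ Finset.univ \ {j}, F i + F j := by
      intro M _ F
      rw [Finset.sdiff_singleton_eq_erase, Finset.sum_erase_add _ _ (Finset.mem_univ j)]
    have hvj : v j = - ∑ i ∈ Finset.univ \ {j}, g i := by simp [v]
    have hvi : ∀ i ∈ Finset.univ \ {j}, v i = g i := by
      intro i hi
      have : i ≠ j := by simpa using hi
      simp [v, this]
    have h1 : ∑ i, v i = 0 := by
      rw [hsplit, hvj, Finset.sum_congr rfl hvi, add_neg_cancel]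
    have h2 : ∑ i, v i • x i = 0 := by
      have e1 : ∑ i, v i • x i = ∑ i ∈ Finset.univ \ {j}, g i • (x i - x j) := by
        rw [hsplit, hvj, Finset.sum_congr rfl fun i hi => by rw [hvi i hi]]
        simp only [smul_sub, Finset.sum_sub_distrib, ← Finset.sum_smul, neg_smul]
        abel
      have e2 := hcc j
      have e3 : (∑ i, m i) • (x j - (∑ i, m i)⁻¹ • ∑ i, m i • x i) =
          - ∑ i ∈ Finset.univ \ {j}, m i • (x i - x j) := by
        rw [smul_sub, smul_inv_smul₀ hM.ne', hsplit (fun i => m i • x i), hsplit m]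
        simp only [smul_sub, Finset.sum_sub_distrib, ← Finset.sum_smul, add_smul]
        abel
      rw [e3] at e2
      rw [e1, ← e2, ← sub_eq_add_neg, ← Finset.sum_sub_distrib]
      refine Finset.sum_congr rfl fun i _ => ?_
      rw [← sub_smul]
      congr 1
      simp only [g]
      ring
    obtain ⟨k, hk⟩ := h3 v h1 h2
    refine ⟨k, fun i hi => ?_⟩
    have := congrFun hk i
    simpa [v, hi, g] using this
  choose k hk using key
  obtain ⟨l, hl⟩ := Function.ne_iff.1 hΔ
  have hl : Δ l ≠ 0 := hl
  have hsym : ∀ i j, i ≠ j → m j * k j * Δ i = m i * k i * Δ j := by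
    intro i j hij
    have a := hk j i hij
    have b := hk i j hij.symm
    rw [dist_comm] at b
    linear_combination (- m j) * a + m i * b
  have hkap : ∀ j, m j * k j = (m l * k l / Δ l) * Δ j := by
    intro j
    by_cases h : j = l
    · subst h; field_simp
    · have := hsym l j (Ne.symm h)
      field_simp
      linear_combination this
  refine ⟨m l * k l / Δ l, fun i j hij => ?_⟩
  have a := hk j i hij
  have b := hkap j
  have hi := (hm i).ne'
  have hj := (hm j).ne'
  generalize m l * k l / Δ l = κ at *
  have : (dist (x i) (x j) ^ c2 - 1) * (m i * m j) = κ * (Δ i * Δ j) := by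
    linear_combination m j * a + Δ i * b
  have h5 : dist (x i) (x j) ^ c2 - 1 = κ * (Δ i * Δ j) / (m i * m j) := by
    rw [eq_div_iff (mul_ne_zero hi hj), this]
  rw [← sub_eq_iff_eq_add', h5]
  field_simp
end


lemma zpow_root {c2 : ℤ} (hc2 : c2 ≠ 0) {r : ℝ} (hr : 0 < r) (k : ℝ) :
    (r ^ c2) ^ (k / c2) = r ^ k := by
  have h : (c2 : ℝ) ≠ 0 := by exact_mod_cast hc2
  rw [← Real.rpow_intCast, ← Real.rpow_mul hr.le]
  congr 1
  field_simp

lemma cmMat_congr {n : ℕ} {X Y : Fin n → Fin n → ℝ} (h : ∀ i j, i ≠ j → X i j = Y i j) :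
    cmMat X = cmMat Y := by
  ext a b
  rcases a with _ | i <;> rcases b with _ | j
  · rfl
  · rfl
  · rfl
  · simp only [cmMat]
    split_ifs with hij
    · rfl
    · exact h i j hij

lemma cmMat_symm {n : ℕ} {X : Fin n → Fin n → ℝ} (h : ∀ i j, X i j = X j i) :
    (cmMat X).IsSymm := by
  apply Matrix.IsSymm.ext
  intro a b
  rcases a with _ | i <;> rcases b with _ | j
  · rfl
  · rfl
  · rfl
  · simp only [cmMat]
    by_cases hij : i = j
    · simp [hij]
    · rw [if_neg hij, if_neg (Ne.symm hij), h]

lemma geom_s19 {n : ℕ} (hn : 4 ≤ n) {c2 : ℤ} (hc2 : c2 ≠ 0) {m : Fin n → ℝ} (hm : ∀ i, 0 < m i)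
    {x : Fin n → EuclideanSpace ℝ (Fin (n - 2))} (hinj : Function.Injective x)
    (hcc : IsCentralConfig c2 m (∑ i, m i) x) (hx : confDim x = n - 2) :
    ∃ ε ∈ ({1, -1} : Finset ℝ), ∃ S : Finset (Fin n), S.Nonempty ∧ ∀ l ∈ S,
      ∃ p : domR ε S, (cmMat (sqR c2 ε (zOf S p.1.1))).det = 0 ∧
        (∀ i, massF S p.1.1 p.1.2 (fun i => clearF c2 (rhoR c2 ε (zOf S p.1.1)) *
          (cmMat (sqR c2 ε (zOf S p.1.1))).adjugate (some i) (some l)) i = m i) ∧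
        ∀ i j, i ≠ j → dist (x i) (x j) = baseR ε (zOf S p.1.1) i j ^ ((1 : ℝ) / c2) := by
  classical
  obtain ⟨Δ, hΔ, h1, h2, h3⟩ := exists_delta (by omega) hx
  obtain ⟨V, hV, hV0, hVk⟩ := cm_kernel (by omega) hx Δ h1 h2 h3
  obtain ⟨κ, hκ⟩ := cc_relation hm (by omega) hcc Δ hΔ h3
  have hd : ∀ i j, i ≠ j → 0 < dist (x i) (x j) := fun i j hij =>
    dist_pos.2 fun h => hij (hinj h)
  obtain ⟨l0, hl0⟩ := Function.ne_iff.1 hΔ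
  have hl0 : Δ l0 ≠ 0 := hl0
  have hκ0 : κ ≠ 0 := by
    rintro rfl
    have e : cmMat (dsq x) = cmMat (fun _ _ => (1 : ℝ)) := by
      apply cmMat_congr
      intro i j hij
      have a := hκ i j hij
      rw [zero_mul, add_zero] at a
      have b := zpow_root hc2 (hd i j hij) 2
      rw [a, Real.one_rpow] at b
      rw [dsq, b]
      norm_cast
    rw [e] at hV0
    have := cmMat_one_ker (by omega) V hV0
    exact hl0 (by rw [← hV, this]; rfl)
  obtain ⟨ε, hε, hεκ⟩ : ∃ ε ∈ ({1, -1} : Finset ℝ), ε * |κ| = κ := by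
    rcases lt_or_gt_of_ne hκ0 with h | h
    · exact ⟨-1, by simp, by rw [abs_of_neg h]; ring⟩
    · exact ⟨1, by simp, by rw [abs_of_pos h]; ring⟩
  have hs0 : 0 < Real.sqrt |κ| := Real.sqrt_pos.2 (abs_pos.2 hκ0)
  have hss : Real.sqrt |κ| * Real.sqrt |κ| = |κ| := Real.mul_self_sqrt (abs_nonneg _)
  generalize Real.sqrt |κ| = s at hs0 hss
  let S : Finset (Fin n) := Finset.univ.filter fun i => Δ i ≠ 0
  have hS : ∀ i, i ∈ S ↔ Δ i ≠ 0 := fun i => by simp [S]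
  let z : Fin n → ℝ := fun i => s * (Δ i / m i)
  let u : Fin n → ℝ := fun i => if i ∈ S then z i else m i
  have hz : zOf S u = z := by
    funext i
    by_cases h : i ∈ S
    · simp [zOf, u, h]
    · have h0 : Δ i = 0 := not_not.1 fun h' => h ((hS i).2 h')
      simp [zOf, h, z, h0]
  have hbase : ∀ i j, i ≠ j → baseR ε z i j = dist (x i) (x j) ^ c2 := by
    intro i j hij
    rw [hκ i j hij, baseR, ← hεκ, ← hss]
    simp only [z]
    ring
  have hdom : ∀ w : ℝ, (u, w) ∈ domR ε S := by
    intro w i j hij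
    simp only [hz]
    rw [hbase i j hij]
    exact zpow_pos (hd i j hij) _
  have hmat : cmMat (sqR c2 ε z) = cmMat (dsq x) := by
    apply cmMat_congr
    intro i j hij
    rw [sqR, hbase i j hij, zpow_root hc2 (hd i j hij), dsq]
    norm_cast
  refine ⟨ε, hε, S, ⟨l0, (hS l0).2 hl0⟩, fun l hl => ?_⟩
  obtain ⟨hdet, c, hc, hadj⟩ := adj_col (cmMat (dsq x))
    (cmMat_symm fun i j => by simp [dsq, dist_comm]) V hV0 hVk (some l)
    (by rw [hV]; exact (hS l).1 hl)
  have hcl : 0 < clearF c2 (rhoR c2 ε z) := by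
    have := clear_pos c2 ε S ⟨(u, 0), hdom 0⟩
    simpa only [hz] using this
  have hprod : ∏ j ∈ S, z j ≠ 0 := Finset.prod_ne_zero_iff.2 fun j hj =>
    mul_ne_zero hs0.ne' (div_ne_zero ((hS j).1 hj) (hm j).ne')
  refine ⟨⟨(u, s / (clearF c2 (rhoR c2 ε z) * c * ∏ j ∈ S, z j)), hdom _⟩, ?_, ?_, ?_⟩
  · simp only [hz, hmat]
    exact hdet
  · intro i
    simp only [hz, hmat, massF]
    split_ifs with h
    · have e1 : ∏ j ∈ S.erase i, u j = ∏ j ∈ S.erase i, z j :=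
        Finset.prod_congr rfl fun j hj => by simp [u, Finset.mem_of_mem_erase hj]
      have e2 : z i * ∏ j ∈ S.erase i, z j = ∏ j ∈ S, z j := Finset.mul_prod_erase S z h
      have e3 : Δ i * s = m i * z i := by
        have := (hm i).ne'
        simp only [z]
        field_simp
      rw [hadj, hV, e1]
      have hcl' := hcl.ne'
      rw [div_mul_eq_mul_div, div_eq_iff (by positivity), ← e2]
      linear_combination (clearF c2 (rhoR c2 ε z) * c * ∏ j ∈ S.erase i, z j) * e3
    · simp [u, h]
  · intro i j hij
    simp only [hz]
    rw [hbase i j hij, zpow_root hc2 (hd i j hij), Real.rpow_one]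


lemma card_PairIdx (n : ℕ) : Fintype.card (PairIdx n) = n * (n - 1) / 2 := by
  let e : PairIdx n ≃ (Σ j : Fin n, Fin j) :=
    { toFun := fun p => ⟨p.1.2, ⟨p.1.1, p.2⟩⟩
      invFun := fun q => ⟨(⟨q.2, q.2.2.trans q.1.2⟩, q.1), q.2.2⟩
      left_inv := fun _ => rfl
      right_inv := fun _ => rfl }
  rw [Fintype.card_congr e, Fintype.card_sigma]
  simp only [Fintype.card_fin]
  rw [Fin.sum_univ_eq_sum_range (fun i => i) n, Finset.sum_range_id]

lemma finite_of_no_inj {α : Type*} (A : Set α) (s : ℕ)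
    (h : ∀ x : Fin (s + 1) → α, Function.Injective x → (∀ j, x j ∈ A) → False) :
    A.Finite ∧ A.ncard ≤ s := by
  have key : ∀ t : Finset α, (t : Set α) ⊆ A → t.card ≤ s := by
    intro t ht
    by_contra hcon
    push Not at hcon
    obtain ⟨t', ht', hc⟩ := Finset.exists_subset_card_eq (Nat.succ_le_of_lt hcon)
    let e := (t'.equivFinOfCardEq hc).symm
    exact h (fun j => (e j).1) (fun a b hab => e.injective (Subtype.ext hab))
      (fun j => ht (ht' (e j).2))
  have hfin : A.Finite := by
    by_contra hinf
    obtain ⟨t, ht, hc⟩ := Set.Infinite.exists_subset_card_eq hinf (s + 1)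
    have := key t ht
    omega
  refine ⟨hfin, ?_⟩
  rw [Set.ncard_eq_toFinset_card A hfin]
  exact key _ (by simp)

lemma beta_ge (n : ℕ) (c2 : ℤ) : 2 * n ≤ betaBound n c2 ∧ c2.natAbs ≤ betaBound n c2 := by
  unfold betaBound
  split_ifs <;> omega

lemma arith {n e β q : ℕ} (hn : 4 ≤ n) (hq : n ≤ q) (h1 : 2 * n ≤ β) (h2 : e ≤ β) :
    2 * 2 ^ n * (n * (n * e + 4 * n * (n + 1)) ^ n * e ^ (q - n)) ≤
      β * (2 * β - 1) ^ (q + n) := by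
  obtain ⟨γ, hγ⟩ : ∃ γ, 2 * β - 1 = γ := ⟨_, rfl⟩
  have hγ' : γ + 1 = 2 * β := by omega
  have a1 : 2 * (n * e + 4 * n * (n + 1)) ≤ γ ^ 2 := by
    have : 2 * (n * e) ≤ β * β := by
      calc 2 * (n * e) = (2 * n) * e := by ring
        _ ≤ β * β := Nat.mul_le_mul h1 h2
    have h4 : (2 * n) * (2 * n) ≤ β * β := Nat.mul_le_mul h1 h1
    have h5 : 8 * β ≤ β * β := Nat.mul_le_mul (by omega) le_rfl
    nlinarith
  have a2 : e ≤ γ := by omega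
  rw [hγ]
  calc 2 * 2 ^ n * (n * (n * e + 4 * n * (n + 1)) ^ n * e ^ (q - n))
      = (2 * n) * ((2 * (n * e + 4 * n * (n + 1))) ^ n * e ^ (q - n)) := by rw [mul_pow]; ring
    _ ≤ β * ((γ ^ 2) ^ n * γ ^ (q - n)) := by gcongr
    _ = β * γ ^ (q + n) := by
        rw [← pow_mul, ← pow_add]
        congr 2
        omega

/-- Let `n ≥ 4`, let `a` be a nonzero semi-integer (`c2 = 2a`),
`q = n(n−1)/2`, and `β = max{−2a+2, 2n}` if `a < 0`, `β = max{2a, 2n}` if `a > 0`.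
Then there is a proper real algebraic subset `B ⊊ ℝ^n` such that for every mass vector
`m ∈ ℝ^n \ B` with all `m_i > 0`, the number of `(n−2)`-dimensional central
configurations with masses `m` for `U_a` up to symmetry — the number of their
mutual-distance vectors, normalized by `λ = M` — is at most `β(2β−1)^{q+n}`. -/
theorem statement19 {n : ℕ} (hn : 4 ≤ n) (c2 : ℤ) (hc2 : c2 ≠ 0) :
    ∃ B : Set (Fin n → ℝ),
      (∃ T : Finset (MvPolynomial (Fin n) ℝ), (∀ p ∈ T, p ≠ 0) ∧
        B = {m | ∀ p ∈ T, MvPolynomial.eval m p = 0}) ∧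
      B ≠ Set.univ ∧
      ∀ m : Fin n → ℝ, m ∉ B → (∀ i, 0 < m i) →
        (ccDistSet n c2 m).Finite ∧
        (ccDistSet n c2 m).ncard ≤
          betaBound n c2 * (2 * betaBound n c2 - 1) ^ (n * (n - 1) / 2 + n) := by
  classical
  have hqn : n ≤ n * (n - 1) / 2 := by
    rw [Nat.le_div_iff_mul_le (by norm_num)]
    exact Nat.mul_le_mul le_rfl (by omega)
  have hsel : ∀ S : Finset (Fin n), ∃ l : Fin n, S.Nonempty → l ∈ S := by
    intro S
    by_cases h : S.Nonempty
    · exact ⟨h.choose, fun _ => h.choose_spec⟩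
    · exact ⟨⟨0, by omega⟩, fun h' => absurd h' h⟩
  choose l hl using hsel
  have hpoly := fun (ε : ℝ) (S : Finset (Fin n)) =>
    fibre_concrete c2 ε S hc2 (by omega) (l S) (card_PairIdx n) hqn
  choose h h0 hh using hpoly
  let I : Finset (ℝ × Finset (Fin n)) := ({1, -1} : Finset ℝ) ×ˢ Finset.univ
  let H : MvPolynomial (Fin n) ℝ := ∏ i ∈ I, h i.1 i.2
  have hH : H ≠ 0 := Finset.prod_ne_zero_iff.2 fun i _ => h0 _ _
  refine ⟨{m | ∀ p ∈ ({H} : Finset (MvPolynomial (Fin n) ℝ)), MvPolynomial.eval m p = 0},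
    ⟨{H}, by simpa using hH, rfl⟩, ?_, ?_⟩
  · intro hB
    apply hH
    apply MvPolynomial.funext
    intro m
    have : m ∈ (Set.univ : Set (Fin n → ℝ)) := trivial
    rw [← hB] at this
    simpa using this
  · intro m hmB hm
    have hmH : ∀ i ∈ I, MvPolynomial.eval m (h i.1 i.2) ≠ 0 := by
      have : MvPolynomial.eval m H ≠ 0 := by simpa using hmB
      rw [map_prod] at this
      exact Finset.prod_ne_zero_iff.1 this
    let s := n * (n * c2.natAbs + 4 * n * (n + 1)) ^ n * c2.natAbs ^ (n * (n - 1) / 2 - n)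
    let A : (i : ℝ × Finset (Fin n)) → Set (domR i.1 i.2) := fun i =>
      {p | (cmMat (sqR c2 i.1 (zOf i.2 p.1.1))).det = 0 ∧
        ∀ k, massF i.2 p.1.1 p.1.2 (fun k => clearF c2 (rhoR c2 i.1 (zOf i.2 p.1.1)) *
          (cmMat (sqR c2 i.1 (zOf i.2 p.1.1))).adjugate (some k) (some (l i.2))) k = m k}
    have hA : ∀ i ∈ I, (A i).Finite ∧ (A i).ncard ≤ s := by
      intro i hi
      apply finite_of_no_inj
      intro x hx hxA
      exact hh i.1 i.2 m (hmH i hi) x hx (fun j => (hxA j).1) (fun j => (hxA j).2)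
    let φ : (i : ℝ × Finset (Fin n)) → domR i.1 i.2 → PairIdx n → ℝ := fun i p q =>
      baseR i.1 (zOf i.2 p.1.1) q.1.1 q.1.2 ^ ((1 : ℝ) / c2)
    have hsub : ccDistSet n c2 m ⊆ ⋃ i ∈ I, φ i '' A i := by
      rintro rv ⟨x, hinj, hcc, hdim, hrv⟩
      obtain ⟨ε, hε, S, hS, hp⟩ := geom_s19 hn hc2 hm hinj hcc hdim
      obtain ⟨p, hp1, hp2, hp3⟩ := hp (l S) (hl S hS)
      refine Set.mem_biUnion (x := (ε, S)) (by simp only [I, Finset.coe_product, Finset.coe_univ]; exact ⟨hε, trivial⟩) ⟨p, ⟨hp1, hp2⟩, ?_⟩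
      funext q
      rw [hrv q, hp3 _ _ q.2.ne]
    have hfin : (⋃ i ∈ I, φ i '' A i).Finite :=
      I.finite_toSet.biUnion fun i hi => ((hA i hi).1).image _
    refine ⟨hfin.subset hsub, ?_⟩
    calc (ccDistSet n c2 m).ncard ≤ (⋃ i ∈ I, φ i '' A i).ncard := Set.ncard_le_ncard hsub hfin
      _ ≤ ∑ i ∈ I, (φ i '' A i).ncard := Finset.set_ncard_biUnion_le I _
      _ ≤ ∑ i ∈ I, s := Finset.sum_le_sum fun i hi =>
          (Set.ncard_image_le (hA i hi).1).trans (hA i hi).2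
      _ = I.card * s := by rw [Finset.sum_const, smul_eq_mul]
      _ ≤ 2 * 2 ^ n * s := by
          apply Nat.mul_le_mul_right
          rw [Finset.card_product, Finset.card_univ, Fintype.card_finset, Fintype.card_fin]
          exact Nat.mul_le_mul_right _ Finset.card_le_two
      _ ≤ _ := arith hn hqn (beta_ge n c2).1 (beta_ge n c2).2
end
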